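/- Let d ≥ 1, ν ∈ (0,2), γ ≤ 0. For a Borel probability measure π on the space of Borel probability measures on ℝ^d (with the topology of weak convergence) concentrated on absolutely continuous probability measures, set π^N = ∫ ρ^{⊗N} π(dρ) for N ≥ 1 and define the mean fractional Fisher information Ĩ_{ν,γ}(π) = limsup_{N→∞} I^N_{ν,γ}(π^N). Let κ ≥ 1 and assume ∫ (∫_{ℝ^d} ⟨v⟩^κ ρ(dv)) π(dρ) < ∞. Let f₀ be a probability measure on ℝ^d with finite κ-th moment, let r > 0, and let B = {ρ : W₁(ρ, f₀) < r}; assume 0 < π(B) < 1 and set F = π(B)^{−1} π restricted to B and G = π(B^c)^{−1} π restricted to B^c. Then for every θ ∈ (0,1): Ĩ_{ν,γ}(θF + (1−θ)G) = θ Ĩ_{ν,γ}(F) + (1−θ) Ĩ_{ν,γ}(G). -/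

import Mathlib

open MeasureTheory ENNReal

noncomputable section

/-- `ℝ^d` as a Euclidean space. -/
abbrev Euc (d : ℕ) := EuclideanSpace ℝ (Fin d)

/-- Japanese bracket `⟨x⟩ = √(1+|x|²)`. -/
def jap {d : ℕ} (x : Euc d) : ℝ := Real.sqrt (1 + ‖x‖^2)

/-- Fractional Sobolev seminorm squared `|f|²_{H^s(ℝ^d)}`, valued in `[0,∞]`. -/
def fracSobolevSq (d : ℕ) (s : ℝ) (f : Euc d → ℝ) : ℝ≥0∞ :=
  ∫⁻ x : Euc d, ∫⁻ y : Euc d, ENNReal.ofReal ((f x - f y)^2 / ‖x - y‖ ^ ((d : ℝ) + 2*s))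

/-- Weighted normalized fractional Fisher information `I^N_{ν,γ}`, valued in `[0,∞]`. -/
def fisherInfo (d N : ℕ) (ν γ : ℝ) (G : (Fin N → Euc d) → ℝ) : ℝ≥0∞ :=
  (N : ℝ≥0∞)⁻¹ * ∑ i : Fin N, ∫⁻ V : Fin N → Euc d, ∫⁻ w : Euc d,
    ENNReal.ofReal ((jap (V i) ^ (γ/2) * Real.sqrt (G V)
      - jap w ^ (γ/2) * Real.sqrt (G (Function.update V i w)))^2
      / ‖V i - w‖ ^ ((d : ℝ) + ν))

/-- A probability density: measurable, nonnegative, total mass one. -/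
def IsProbDensity {α : Type*} [MeasureSpace α] (f : α → ℝ) : Prop :=
  Measurable f ∧ (∀ x, 0 ≤ f x) ∧ ∫⁻ x, ENNReal.ofReal (f x) = 1

/-- A symmetric (exchangeable) probability density on `(ℝ^d)^N`. -/
def IsSymDensity (d N : ℕ) (F : (Fin N → Euc d) → ℝ) : Prop :=
  IsProbDensity F ∧ ∀ (σ : Equiv.Perm (Fin N)) (V : Fin N → Euc d), F (V ∘ σ) = F V

/-- Borel σ-algebra on the space of probability measures with its weak topology. -/
instance pmBorel {α : Type*} [MeasurableSpace α] [TopologicalSpace α]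
    [OpensMeasurableSpace α] : MeasurableSpace (ProbabilityMeasure α) := borel _

/-- Wasserstein-1 distance via Kantorovich–Rubinstein duality. -/
def W1 {d : ℕ} (f g : Measure (Euc d)) : ℝ :=
  sSup {t : ℝ | ∃ φ : Euc d → ℝ, LipschitzWith 1 φ ∧
    t = (∫ x, φ x ∂f) - ∫ x, φ x ∂g}

/-- The mixture `π^N = ∫ ρ^{⊗N} π(dρ)`. -/
def mixture (d : ℕ) (π : Measure (ProbabilityMeasure (Euc d))) (N : ℕ) :
    Measure (Fin N → Euc d) :=
  π.bind (fun ρ => Measure.pi (fun _ : Fin N => (ρ : Measure (Euc d))))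

/-- Fisher information of a measure, computed through its Lebesgue density. -/
def fisherInfoM (d N : ℕ) (ν γ : ℝ) (μ : Measure (Fin N → Euc d)) : ℝ≥0∞ :=
  fisherInfo d N ν γ (fun V => (μ.rnDeriv volume V).toReal)

/-- The mean fractional Fisher information `Ĩ_{ν,γ}(π) = limsup_N I^N_{ν,γ}(π^N)`. -/
def meanFisher (d : ℕ) (ν γ : ℝ) (π : Measure (ProbabilityMeasure (Euc d))) : ℝ≥0∞ :=
  Filter.limsup (fun N => fisherInfoM d N ν γ (mixture d π N)) Filter.atTop


/-! ### Part 1: the abstract functional -/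
namespace St14

def DD (s t : ℝ) (A B : ℝ≥0∞) : ℝ≥0∞ :=
  ENNReal.ofReal ((s * Real.sqrt A.toReal - t * Real.sqrt B.toReal) ^ 2)

lemma measurable_DD {α : Type*} [MeasurableSpace α] {s t : α → ℝ} {f g : α → ℝ≥0∞}
    (hs : Measurable s) (ht : Measurable t) (hf : Measurable f) (hg : Measurable g) :
    Measurable fun x => DD (s x) (t x) (f x) (g x) := by
  unfold DD
  fun_prop

lemma DD_smul (s t : ℝ) (c A B : ℝ≥0∞) : DD s t (c * A) (c * B) = ENNReal.ofReal c.toReal * DD s t A B := by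
  unfold DD
  rw [← ENNReal.ofReal_mul ENNReal.toReal_nonneg, ENNReal.toReal_mul, ENNReal.toReal_mul,
    Real.sqrt_mul ENNReal.toReal_nonneg, Real.sqrt_mul ENNReal.toReal_nonneg]
  congr 1
  have h := Real.mul_self_sqrt (ENNReal.toReal_nonneg (a := c))
  rw [← h]
  set x := √c.toReal
  rw [Real.sqrt_mul_self (Real.sqrt_nonneg _)]
  ring

lemma DD_add_eq (s t : ℝ) (hs : 0 ≤ s) (ht : 0 ≤ t) {A B : ℝ≥0∞} (hA : A ≠ ⊤) (hB : B ≠ ⊤) :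
    DD s t A B + ENNReal.ofReal (2 * s * t) * (A ^ (1/2 : ℝ) * B ^ (1/2 : ℝ))
      = ENNReal.ofReal (s^2) * A + ENNReal.ofReal (t^2) * B := by
  lift A to NNReal using hA
  lift B to NNReal using hB
  unfold DD
  have e1 : ((A : ℝ≥0∞) ^ (1/2 : ℝ)) = ENNReal.ofReal (√(A : ℝ)) := by
    rw [Real.sqrt_eq_rpow, ← ENNReal.ofReal_rpow_of_nonneg A.coe_nonneg (by norm_num)]; simp
  have e2 : ((B : ℝ≥0∞) ^ (1/2 : ℝ)) = ENNReal.ofReal (√(B : ℝ)) := by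
    rw [Real.sqrt_eq_rpow, ← ENNReal.ofReal_rpow_of_nonneg B.coe_nonneg (by norm_num)]; simp
  have e3 : (A : ℝ≥0∞) = ENNReal.ofReal A := by simp
  have e4 : (B : ℝ≥0∞) = ENNReal.ofReal B := by simp
  rw [e1, e2]
  simp only [ENNReal.coe_toReal]
  rw [e3, e4, ← ENNReal.ofReal_mul (by positivity), ← ENNReal.ofReal_mul (by positivity),
    ← ENNReal.ofReal_mul (by positivity), ← ENNReal.ofReal_mul (by positivity),
    ← ENNReal.ofReal_add (by positivity) (by positivity),
    ← ENNReal.ofReal_add (by positivity) (by positivity)]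
  congr 1
  have h1 := Real.sq_sqrt A.2
  have h2 := Real.sq_sqrt B.2
  simp only [NNReal.val_eq_coe] at h1 h2
  nlinarith [h1, h2]

lemma DD_core {Y : Type*} [MeasurableSpace Y] (η : Measure Y) (s t : ℝ) (hs : 0 ≤ s) (ht : 0 ≤ t)
    {u u' : Y → ℝ≥0∞} (hu : Measurable u) (hu' : Measurable u')
    (hA : ∫⁻ y, u y ∂η ≠ ⊤) (hB : ∫⁻ y, u' y ∂η ≠ ⊤) :
    DD s t (∫⁻ y, u y ∂η) (∫⁻ y, u' y ∂η) ≤ ∫⁻ y, DD s t (u y) (u' y) ∂η := by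
  set A := ∫⁻ y, u y ∂η with hAdef
  set B := ∫⁻ y, u' y ∂η with hBdef
  set c := ENNReal.ofReal (2 * s * t) * (A ^ (1/2 : ℝ) * B ^ (1/2 : ℝ)) with hc
  have hcfin : c ≠ ⊤ := by
    refine ENNReal.mul_ne_top ENNReal.ofReal_ne_top (ENNReal.mul_ne_top ?_ ?_)
    · exact ENNReal.rpow_ne_top_of_nonneg (by norm_num) hA
    · exact ENNReal.rpow_ne_top_of_nonneg (by norm_num) hB
  have hDm : Measurable fun y => DD s t (u y) (u' y) :=
    measurable_DD measurable_const measurable_const hu hu'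
  have key : DD s t A B + c ≤ ∫⁻ y, DD s t (u y) (u' y) ∂η + c := by
    rw [DD_add_eq s t hs ht hA hB]
    have hae : ∀ᵐ y ∂η, DD s t (u y) (u' y)
        + ENNReal.ofReal (2 * s * t) * (u y ^ (1/2 : ℝ) * u' y ^ (1/2 : ℝ))
        = ENNReal.ofReal (s^2) * u y + ENNReal.ofReal (t^2) * u' y := by
      filter_upwards [ae_lt_top hu hA, ae_lt_top hu' hB] with y h1 h2
      exact DD_add_eq s t hs ht h1.ne h2.ne
    have h1 : ENNReal.ofReal (s^2) * A + ENNReal.ofReal (t^2) * B =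
        ∫⁻ y, DD s t (u y) (u' y) ∂η
          + ENNReal.ofReal (2 * s * t) * ∫⁻ y, (u y ^ (1/2 : ℝ) * u' y ^ (1/2 : ℝ)) ∂η := by
      rw [hAdef, hBdef, ← lintegral_const_mul _ hu, ← lintegral_const_mul _ hu',
        ← lintegral_add_left (by fun_prop), ← lintegral_congr_ae hae,
        lintegral_add_left hDm, lintegral_const_mul _ (by fun_prop)]
    rw [h1, hc]
    gcongr
    have := ENNReal.lintegral_mul_le_Lp_mul_Lq η (p := 2) (q := 2)
      (Real.HolderConjugate.two_two)
      (f := fun y => u y ^ (1/2 : ℝ)) (g := fun y => u' y ^ (1/2 : ℝ))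
      (by fun_prop) (by fun_prop)
    simp only [← ENNReal.rpow_mul] at this
    norm_num at this
    norm_num
    simpa using this
  exact (ENNReal.add_le_add_iff_right hcfin).1 key

variable {E : Type*} [MeasureSpace E] {X : Type*} [MeasureSpace X] {Y : Type*} [MeasureSpace Y]

/-- the functional on densities on `E × X` -/
def JJ (a : E → ℝ) (K : E → E → ℝ≥0∞) (g : E × X → ℝ≥0∞) : ℝ≥0∞ :=
  ∫⁻ x : X, ∫⁻ v : E, ∫⁻ w : E, DD (a v) (a w) (g (v, x)) (g (w, x)) * K v w

variable {a : E → ℝ} {K : E → E → ℝ≥0∞}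

lemma JJ_congr [SFinite (volume : Measure E)] [SFinite (volume : Measure X)]
    {g g' : E × X → ℝ≥0∞}
    (h : g =ᵐ[(volume : Measure E).prod (volume : Measure X)] g') : JJ a K g = JJ a K g' := by
  have h2 := Measure.ae_ae_of_ae_prod ((Measure.measurePreserving_swap (μ := (volume : Measure X)) (ν := (volume : Measure E))).quasiMeasurePreserving.ae h)
  refine lintegral_congr_ae ?_
  filter_upwards [h2] with x hx
  refine lintegral_congr_ae ?_
  filter_upwards [hx] with v hv
  refine lintegral_congr_ae ?_
  filter_upwards [hx] with w hw
  simp only [Prod.swap] at hv hw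
  rw [hv, hw]

lemma JJ_smul [SFinite (volume : Measure E)] (c : ℝ≥0∞) (hc : c ≠ ⊤) (ha : Measurable a)
    (hK : Measurable (Function.uncurry K))
    {g : E × X → ℝ≥0∞} (hg : Measurable g) :
    JJ a K (fun z => c * g z) = c * JJ a K g := by
  unfold JJ
  simp only [DD_smul, ENNReal.ofReal_toReal hc, mul_assoc]
  have hm : ∀ x, Measurable (Function.uncurry
      fun v w => DD (a v) (a w) (g (v, x)) (g (w, x)) * K v w) := by
    intro x
    refine Measurable.mul (measurable_DD ?_ ?_ ?_ ?_) hK <;> fun_prop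
  have e1 : ∀ x v, ∫⁻ w, c * (DD (a v) (a w) (g (v, x)) (g (w, x)) * K v w) =
     c * ∫⁻ w, (DD (a v) (a w) (g (v, x)) (g (w, x)) * K v w) := fun x v =>
    lintegral_const_mul' _ _ hc
  simp only [e1]
  simp only [lintegral_const_mul' _ _ hc]

/-- core monotonicity statement: integrating out a variable -/
lemma JJ_marginal [SFinite (volume : Measure E)] [SFinite (volume : Measure X)]
    [SFinite (volume : Measure Y)]
    (η : Measure Y) [SFinite η] (ha : Measurable a) (ha0 : ∀ v, 0 ≤ a v)
    (hK : Measurable (Function.uncurry K))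
    {h : E × (X × Y) → ℝ≥0∞} (hh : Measurable h)
    (hfin : ∀ᵐ z : E × X ∂((volume : Measure E).prod (volume : Measure X)),
      ∫⁻ y, h (z.1, (z.2, y)) ∂η ≠ ⊤) :
    JJ a K (fun z : E × X => ∫⁻ y, h (z.1, (z.2, y)) ∂η)
      ≤ ∫⁻ x : X, ∫⁻ y, (∫⁻ v : E, ∫⁻ w : E,
          DD (a v) (a w) (h (v, (x, y))) (h (w, (x, y))) * K v w) ∂η := by
  have h2 := Measure.ae_ae_of_ae_prod ((Measure.measurePreserving_swap (μ := (volume : Measure X)) (ν := (volume : Measure E))).quasiMeasurePreserving.ae hfin)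
  refine lintegral_mono_ae ?_
  filter_upwards [h2] with x hx
  have hm : Measurable (fun q : (E × E) × Y =>
      DD (a q.1.1) (a q.1.2) (h (q.1.1, (x, q.2))) (h (q.1.2, (x, q.2))) * K q.1.1 q.1.2) := by
    refine Measurable.mul (measurable_DD ?_ ?_ ?_ ?_) ?_
    · fun_prop
    · fun_prop
    · fun_prop
    · fun_prop
    · exact hK.comp measurable_fst
  calc _ ≤ ∫⁻ v : E, ∫⁻ w : E, ∫⁻ y,
          DD (a v) (a w) (h (v, (x, y))) (h (w, (x, y))) * K v w ∂η := by
        refine lintegral_mono_ae ?_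
        filter_upwards [hx] with v hv
        refine lintegral_mono_ae ?_
        filter_upwards [hx] with w hw
        simp only [Prod.swap] at hv hw
        rw [lintegral_mul_const _ (measurable_DD (by fun_prop) (by fun_prop) (by fun_prop) (by fun_prop))]
        gcongr
        exact DD_core η _ _ (ha0 v) (ha0 w) (by fun_prop) (by fun_prop) hv hw
    _ = ∫⁻ v : E, ∫⁻ y, ∫⁻ w : E, 
          DD (a v) (a w) (h (v, (x, y))) (h (w, (x, y))) * K v w ∂volume ∂η := by
        refine lintegral_congr fun v => ?_
        rw [lintegral_lintegral_swap]
        exact (hm.comp (f := fun q : E × Y => ((v, q.1), q.2)) (by fun_prop)).aemeasurable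
    _ = _ := by
        rw [lintegral_lintegral_swap]
        have : Measurable (fun q : (E × Y) × E =>
            DD (a q.1.1) (a q.2) (h (q.1.1, (x, q.1.2))) (h (q.2, (x, q.1.2))) * K q.1.1 q.2) :=
          hm.comp (f := fun q : (E × Y) × E => ((q.1.1, q.2), q.1.2)) (by fun_prop)
        exact this.lintegral_prod_right'.aemeasurable

lemma JJ_split [SFinite (volume : Measure E)] [SFinite (volume : Measure X)]
    [SigmaFinite (volume : Measure Y)]
    (ha : Measurable a) (ha0 : ∀ v, 0 ≤ a v)
    (hK : Measurable (Function.uncurry K))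
    {h : E × (X × Y) → ℝ≥0∞} (hh : Measurable h)
    (hfin : ∀ᵐ z : E × X ∂((volume : Measure E).prod (volume : Measure X)),
      ∫⁻ y, h (z.1, (z.2, y)) ≠ ⊤)
    {ψ ψ' : Y → ℝ≥0∞} (hψ : Measurable ψ) (hψ' : Measurable ψ') (hsum : ∀ y, ψ y + ψ' y = 1) :
    JJ a K (fun z : E × X => ∫⁻ y, h (z.1, (z.2, y)) * ψ y)
     + JJ a K (fun z : E × X => ∫⁻ y, h (z.1, (z.2, y)) * ψ' y) ≤ JJ a K h := by
  have e : ∀ (φ : Y → ℝ≥0∞), Measurable φ → (∀ z : E × X, ∫⁻ y, h (z.1, (z.2, y)) * φ y =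
     ∫⁻ y, h (z.1, (z.2, y)) ∂(volume.withDensity φ)) := by
    intro φ hφ z
    rw [lintegral_withDensity_eq_lintegral_mul _ hφ (by fun_prop)]
    refine lintegral_congr fun y => ?_
    simp [mul_comm]
  have hle : ∀ (φ : Y → ℝ≥0∞), Measurable φ → (∀ y, φ y ≤ 1) → 
    ∀ᵐ z : E × X ∂((volume : Measure E).prod (volume : Measure X)),
      ∫⁻ y, h (z.1, (z.2, y)) ∂(volume.withDensity φ) ≠ ⊤ := by
    intro φ hφ h1
    filter_upwards [hfin] with z hz
    rw [← e φ hφ]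
    refine ne_top_of_le_ne_top hz (lintegral_mono fun y => ?_)
    exact mul_le_of_le_one_right' (h1 y)
  simp only [e ψ hψ, e ψ' hψ']
  have hm : Measurable (fun q : ((X × Y) × E) × E =>
      DD (a q.1.2) (a q.2) (h (q.1.2, q.1.1)) (h (q.2, q.1.1)) * K q.1.2 q.2) := by
    refine Measurable.mul (measurable_DD ?_ ?_ ?_ ?_) ?_
    · fun_prop
    · fun_prop
    · fun_prop
    · fun_prop
    · exact hK.comp (f := fun q : ((X × Y) × E) × E => (q.1.2, q.2)) (by fun_prop)
  have hm2 : Measurable fun q : X × Y => (∫⁻ v : E, ∫⁻ w : E,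
          DD (a v) (a w) (h (v, q)) (h (w, q)) * K v w) :=
    hm.lintegral_prod_right'.lintegral_prod_right'
  refine (add_le_add
    (JJ_marginal _ ha ha0 hK hh (hle ψ hψ fun y => hsum y ▸ le_self_add))
    (JJ_marginal _ ha ha0 hK hh (hle ψ' hψ' fun y => hsum y ▸ le_add_self))).trans ?_
  rw [← lintegral_add_left]
  swap
  · exact hm2.lintegral_prod_right'
  simp only [← lintegral_add_measure]
  have e2 : volume.withDensity ψ + volume.withDensity ψ' = (volume : Measure Y) := by
    rw [← withDensity_add_left hψ]
    have : ψ + ψ' = 1 := by ext y; simpa using hsum y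
    rw [this, withDensity_one]
  rw [e2]
  unfold JJ
  rw [show (volume : Measure (X × Y)) = (volume : Measure X).prod volume from rfl,
    lintegral_prod _ hm2.aemeasurable]

lemma DD_add_le (s t : ℝ) (hs : 0 ≤ s) (ht : 0 ≤ t) {A B A' B' : ℝ≥0∞} (hA : A ≠ ⊤) (hB : B ≠ ⊤)
    (hA' : A' ≠ ⊤) (hB' : B' ≠ ⊤) : DD s t (A + A') (B + B') ≤ DD s t A B + DD s t A' B' := by
  have := DD_core (Y := Bool) Measure.count s t hs ht (u := fun b => cond b A A')
    (u' := fun b => cond b B B') (measurable_of_finite _) (measurable_of_finite _)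
  simp only [lintegral_count, tsum_fintype, Fintype.sum_bool, cond_true, cond_false] at this
  exact this (by simp [*]) (by simp [*])

lemma JJ_add_le [SFinite (volume : Measure E)] [SFinite (volume : Measure X)]
    (ha : Measurable a) (ha0 : ∀ v, 0 ≤ a v)
    (hK : Measurable (Function.uncurry K))
    {g g' : E × X → ℝ≥0∞} (hg : Measurable g) (hg' : Measurable g')
    (hfin : ∀ᵐ z ∂((volume : Measure E).prod (volume : Measure X)), g z ≠ ⊤)
    (hfin' : ∀ᵐ z ∂((volume : Measure E).prod (volume : Measure X)), g' z ≠ ⊤) :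
    JJ a K (fun z => g z + g' z) ≤ JJ a K g + JJ a K g' := by
  have h2 := Measure.ae_ae_of_ae_prod ((Measure.measurePreserving_swap (μ := (volume : Measure X)) (ν := (volume : Measure E))).quasiMeasurePreserving.ae (hfin.and hfin'))
  have hm : Measurable (fun q : (X × E) × E =>
      DD (a q.1.2) (a q.2) (g (q.1.2, q.1.1)) (g (q.2, q.1.1)) * K q.1.2 q.2) := by
    refine Measurable.mul (measurable_DD ?_ ?_ ?_ ?_) ?_
    · fun_prop
    · fun_prop
    · fun_prop
    · fun_prop
    · exact hK.comp (f := fun q : (X × E) × E => (q.1.2, q.2)) (by fun_prop)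
  unfold JJ
  rw [← lintegral_add_left hm.lintegral_prod_right'.lintegral_prod_right']
  refine lintegral_mono_ae ?_
  filter_upwards [h2] with x hx
  have hm1 : Measurable fun v : E => ∫⁻ w : E, DD (a v) (a w) (g (v, x)) (g (w, x)) * K v w :=
    (show Measurable fun q : E × E => DD (a q.1) (a q.2) (g (q.1, x)) (g (q.2, x)) * K q.1 q.2 from
      hm.comp (f := fun q : E × E => ((x, q.1), q.2)) (by fun_prop)).lintegral_prod_right'
  rw [← lintegral_add_left hm1]
  refine lintegral_mono_ae ?_
  filter_upwards [hx] with v hv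
  have hm3 : Measurable fun w : E => DD (a v) (a w) (g (v, x)) (g (w, x)) * K v w :=
    hm.comp (f := fun w => ((x, v), w)) (by fun_prop)
  rw [← lintegral_add_left hm3]
  refine lintegral_mono_ae ?_
  filter_upwards [hx] with w hw
  rw [← add_mul]
  gcongr
  exact DD_add_le _ _ (ha0 v) (ha0 w) hv.1 hw.1 hv.2 hw.2

/-- lower semicontinuity -/
lemma JJ_lsc [SFinite (volume : Measure E)] [SFinite (volume : Measure X)]
    (ha : Measurable a) (hK : Measurable (Function.uncurry K))
    {g : ℕ → E × X → ℝ≥0∞} {g' : E × X → ℝ≥0∞} (hg : ∀ n, Measurable (g n))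
    (hfin : ∀ᵐ z ∂((volume : Measure E).prod (volume : Measure X)), g' z ≠ ⊤)
    (hlim : ∀ᵐ z ∂((volume : Measure E).prod (volume : Measure X)),
      Filter.Tendsto (fun n => g n z) Filter.atTop (nhds (g' z))) :
    JJ a K g' ≤ Filter.liminf (fun n => JJ a K (g n)) Filter.atTop := by
  have h2 := Measure.ae_ae_of_ae_prod ((Measure.measurePreserving_swap (μ := (volume : Measure X)) (ν := (volume : Measure E))).quasiMeasurePreserving.ae (hfin.and hlim))
  have hm : ∀ n, Measurable (fun q : (X × E) × E =>
      DD (a q.1.2) (a q.2) (g n (q.1.2, q.1.1)) (g n (q.2, q.1.1)) * K q.1.2 q.2) := by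
    intro n
    have := hg n
    refine Measurable.mul (measurable_DD ?_ ?_ ?_ ?_) ?_
    · fun_prop
    · fun_prop
    · fun_prop
    · fun_prop
    · exact hK.comp (f := fun q : (X × E) × E => (q.1.2, q.2)) (by fun_prop)
  unfold JJ
  have hm0 : ∀ n, Measurable fun x : X => ∫⁻ v : E, ∫⁻ w : E,
      DD (a v) (a w) (g n (v, x)) (g n (w, x)) * K v w :=
    fun n => (hm n).lintegral_prod_right'.lintegral_prod_right'
  refine le_trans ?_ (lintegral_liminf_le hm0)
  refine lintegral_mono_ae ?_
  filter_upwards [h2] with x hx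
  have hm1 : ∀ n, Measurable fun v : E => ∫⁻ w : E,
      DD (a v) (a w) (g n (v, x)) (g n (w, x)) * K v w :=
    fun n => (show Measurable fun q : E × E =>
        DD (a q.1) (a q.2) (g n (q.1, x)) (g n (q.2, x)) * K q.1 q.2 from
      (hm n).comp (f := fun q : E × E => ((x, q.1), q.2)) (by fun_prop)).lintegral_prod_right'
  refine le_trans ?_ (lintegral_liminf_le hm1)
  refine lintegral_mono_ae ?_
  filter_upwards [hx] with v hv
  have hm3 : ∀ n, Measurable fun w : E => DD (a v) (a w) (g n (v, x)) (g n (w, x)) * K v w :=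
    fun n => (hm n).comp (f := fun w => ((x, v), w)) (by fun_prop)
  refine le_trans ?_ (lintegral_liminf_le hm3)
  refine lintegral_mono_ae ?_
  filter_upwards [hx] with w hw
  simp only [Prod.swap] at hv hw
  have ht : Filter.Tendsto (fun n => DD (a v) (a w) (g n (v, x)) (g n (w, x))) Filter.atTop
      (nhds (DD (a v) (a w) (g' (v, x)) (g' (w, x)))) := by
    unfold DD
    refine (ENNReal.continuous_ofReal.tendsto _).comp ?_
    have h1 := (ENNReal.tendsto_toReal hv.1).comp hv.2
    have h2 := (ENNReal.tendsto_toReal hw.1).comp hw.2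
    exact (((h1.sqrt).const_mul _).sub ((h2.sqrt).const_mul _)).pow 2
  calc DD (a v) (a w) (g' (v, x)) (g' (w, x)) * K v w 
      = Filter.liminf (fun n => DD (a v) (a w) (g n (v, x)) (g n (w, x))) Filter.atTop * K v w := by
        rw [ht.liminf_eq]
    _ ≤ _ := by
      rcases eq_or_ne (K v w) ⊤ with hk | hk
      · rcases eq_or_ne (DD (a v) (a w) (g' (v, x)) (g' (w, x))) 0 with h0 | h0
        · rw [ht.liminf_eq, h0, zero_mul]; exact zero_le
        · have hev : ∀ᶠ n in Filter.atTop, DD (a v) (a w) (g n (v, x)) (g n (w, x)) ≠ 0 :=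
            ht.eventually_ne h0
          rw [hk]
          refine le_top.trans ?_
          refine Filter.le_liminf_of_le (by isBoundedDefault) ?_
          filter_upwards [hev] with n hn
          rw [ENNReal.mul_top hn]
      · have := (ENNReal.Tendsto.mul_const ht (Or.inr hk)).liminf_eq
        rw [ht.liminf_eq]
        exact this.ge

end St14

/-! ### Part 2: mixtures -/
namespace St14
set_option linter.unusedSectionVars false

section prodlem
variable {E : Type*} [MeasureSpace E] [SigmaFinite (volume : Measure E)]

lemma lintegral_pi_prod_fin (n : ℕ) (f : Fin n → E → ℝ≥0∞) (hf : ∀ i, Measurable (f i)) :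
    ∫⁻ x : Fin n → E, ∏ i, f i (x i) = ∏ i, ∫⁻ v, f i v := by
  induction n with
  | zero => simp [volume_pi]
  | succ n ih =>
    rw [← ((volume_preserving_piFinSuccAbove (fun _ : Fin (n+1) => E) 0).symm).lintegral_comp_emb
      (MeasurableEquiv.measurableEmbedding _)]
    rw [Fin.prod_univ_succ, ← ih (fun i => f i.succ) (fun i => hf _)]
    simp only [Fin.prod_univ_succ]
    rw [show (volume : Measure (E × (Fin n → E))) = (volume : Measure E).prod volume from rfl,
      ← lintegral_prod_mul (hf 0).aemeasurable]
    · refine lintegral_congr fun z => ?_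
      simp [MeasurableEquiv.piFinSuccAbove]
    · exact (Finset.measurable_prod _ fun i _ => (hf _).comp (measurable_pi_apply i)).aemeasurable

lemma lintegral_pi_prod {ι : Type*} [Fintype ι] (f : ι → E → ℝ≥0∞) (hf : ∀ i, Measurable (f i)) :
    ∫⁻ x : ι → E, ∏ i, f i (x i) = ∏ i, ∫⁻ v, f i v := by
  let e := (Fintype.equivFin ι).symm
  rw [← ((volume_measurePreserving_piCongrLeft (fun _ : ι => E) e)).lintegral_comp_emb
      (MeasurableEquiv.measurableEmbedding _)]
  rw [← e.prod_comp, ← lintegral_pi_prod_fin _ (fun i => f (e i)) (fun i => hf _)]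
  refine lintegral_congr fun x => ?_
  rw [← e.prod_comp]
  refine Finset.prod_congr rfl fun i _ => ?_
  congr 1
  exact MeasurableEquiv.piCongrLeft_apply_apply (β := fun _ : ι => E) (e := e) x i

lemma pi_withDensity {ι : Type*} [Fintype ι] (f : E → ℝ≥0∞) (hf : Measurable f)
    [SigmaFinite ((volume : Measure E).withDensity f)] :
    Measure.pi (fun _ : ι => (volume : Measure E).withDensity f)
      = (volume : Measure (ι → E)).withDensity (fun x => ∏ i, f (x i)) := by
  refine (Measure.pi_eq (μ := fun _ : ι => (volume : Measure E).withDensity f) fun s hs => ?_)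
  rw [withDensity_apply _ (MeasurableSet.univ_pi hs), ← lintegral_indicator (MeasurableSet.univ_pi hs)]
  have : ∀ i, (volume.withDensity f) (s i) = ∫⁻ v, (s i).indicator f v := by
    intro i
    rw [withDensity_apply _ (hs i), lintegral_indicator (hs i)]
  simp only [this]
  rw [← lintegral_pi_prod _ (fun i => hf.indicator (hs i))]
  refine lintegral_congr fun x => ?_
  by_cases hx : x ∈ Set.univ.pi s
  · rw [Set.indicator_of_mem hx]
    refine Finset.prod_congr rfl fun i _ => ?_
    rw [Set.indicator_of_mem (hx i (Set.mem_univ i))]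
  · rw [Set.indicator_of_notMem hx]
    simp only [Set.mem_univ_pi, not_forall] at hx
    obtain ⟨i, hi⟩ := hx
    refine (Finset.prod_eq_zero (Finset.mem_univ i) ?_).symm
    rw [Set.indicator_of_notMem hi]

end prodlem

lemma JJ_comp {E : Type*} [MeasureSpace E] {X X' : Type*} [MeasureSpace X] [MeasureSpace X']
    (a : E → ℝ) (K : E → E → ℝ≥0∞) (e : X' ≃ᵐ X) (he : MeasurePreserving e volume volume)
    (g : E × X → ℝ≥0∞) : JJ a K (fun z : E × X' => g (z.1, e z.2)) = JJ a K g := by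
  unfold JJ
  exact he.lintegral_comp_emb e.measurableEmbedding (fun x => ∫⁻ v : E, ∫⁻ w : E, DD (a v) (a w) (g (v, x)) (g (w, x)) * K v w)

section mix
variable {E : Type*} [MeasureSpace E] [SigmaFinite (volume : Measure E)]
variable {Ω : Type*} [MeasurableSpace Ω] (π : Measure Ω) [IsFiniteMeasure π]
  (p : Ω → E → ℝ≥0∞) (a : E → ℝ) (K : E → E → ℝ≥0∞)

def ff (ι : Type*) [Fintype ι] (Φ : Ω → ℝ≥0∞) : E × (ι → E) → ℝ≥0∞ :=
  fun z => ∫⁻ ω, Φ ω * (p ω z.1 * ∏ i, p ω (z.2 i)) ∂π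

def jj (ι : Type*) [Fintype ι] (Φ : Ω → ℝ≥0∞) : ℝ≥0∞ := JJ a K (ff π p ι Φ)

variable {π p a K} {ι : Type*} [Fintype ι] {ι' : Type*} [Fintype ι'] {Φ Φ' : Ω → ℝ≥0∞}

lemma jj_congr (h : Φ =ᵐ[π] Φ') : jj π p a K ι Φ = jj π p a K ι Φ' := by
  unfold jj
  congr 1
  ext z
  refine lintegral_congr_ae ?_
  filter_upwards [h] with ω hω
  rw [hω]

lemma measurable_q (hp : Measurable (Function.uncurry p)) :
    Measurable fun q : (E × (ι → E)) × Ω => p q.2 q.1.1 * ∏ i, p q.2 (q.1.2 i) := by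
  refine Measurable.mul ?_ (Finset.measurable_prod _ fun i _ => ?_)
  · exact hp.comp (f := fun q : (E × (ι → E)) × Ω => (q.2, q.1.1)) (by fun_prop)
  · exact hp.comp (f := fun q : (E × (ι → E)) × Ω => (q.2, q.1.2 i)) (by fun_prop)

lemma measurable_ff (hp : Measurable (Function.uncurry p)) (hΦ : Measurable Φ) :
    Measurable (ff π p ι Φ) := by
  have : Measurable fun q : (E × (ι → E)) × Ω => Φ q.2 * (p q.2 q.1.1 * ∏ i, p q.2 (q.1.2 i)) :=
    (hΦ.comp measurable_snd).mul (measurable_q hp)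
  exact this.lintegral_prod_right'

lemma measurable_p (hp : Measurable (Function.uncurry p)) (ω : Ω) : Measurable (p ω) :=
  hp.comp measurable_prodMk_left

lemma ff_ne_top (hp : Measurable (Function.uncurry p)) (hp1 : ∀ ω, ∫⁻ v, p ω v ≤ 1)
    (hΦ : Measurable Φ) (hfin : ∫⁻ ω, Φ ω ∂π ≠ ⊤) :
    ∀ᵐ z ∂((volume : Measure E).prod (volume : Measure (ι → E))), ff π p ι Φ z ≠ ⊤ := by
  have hm := measurable_ff (π := π) (ι := ι) hp hΦ
  have hm2 : Measurable fun q : (E × (ι → E)) × Ω => Φ q.2 * (p q.2 q.1.1 * ∏ i, p q.2 (q.1.2 i)) :=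
    (hΦ.comp measurable_snd).mul (measurable_q hp)
  have : ∫⁻ z, ff π p ι Φ z ∂((volume : Measure E).prod (volume : Measure (ι → E))) ≠ ⊤ := by
    refine ne_top_of_le_ne_top hfin ?_
    unfold ff
    rw [lintegral_lintegral_swap hm2.aemeasurable]
    refine lintegral_mono fun ω => ?_
    have hmq : Measurable fun x : ι → E => ∏ i, p ω (x i) :=
      Finset.measurable_prod _ fun i _ => (measurable_p hp ω).comp (measurable_pi_apply i)
    have hmp := measurable_p hp ω
    rw [lintegral_const_mul _ (by fun_prop), lintegral_prod_mul (measurable_p hp ω).aemeasurable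
      hmq.aemeasurable, lintegral_pi_prod _ (fun i => measurable_p hp ω)]
    refine mul_le_of_le_one_right' ?_
    exact mul_le_one' (hp1 ω) (Finset.prod_le_one' fun i _ => hp1 ω)
  filter_upwards [ae_lt_top hm this] with z hz using hz.ne

lemma jj_smul (ha : Measurable a) (hK : Measurable (Function.uncurry K))
    (hp : Measurable (Function.uncurry p)) (hΦ : Measurable Φ) (c : ℝ≥0∞) (hc : c ≠ ⊤) :
    jj π p a K ι (fun ω => c * Φ ω) = c * jj π p a K ι Φ := by
  unfold jj
  have h := JJ_smul (a := a) c hc ha hK (measurable_ff (π := π) (ι := ι) hp hΦ)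
  refine Eq.trans ?_ h
  congr 1
  ext z
  unfold ff
  rw [← lintegral_const_mul' _ _ hc]
  simp only [mul_assoc]

lemma jj_add_le (ha : Measurable a) (ha0 : ∀ v, 0 ≤ a v) (hK : Measurable (Function.uncurry K))
    (hp : Measurable (Function.uncurry p)) (hp1 : ∀ ω, ∫⁻ v, p ω v ≤ 1)
    (hΦ : Measurable Φ) (hfin : ∫⁻ ω, Φ ω ∂π ≠ ⊤)
    (hΦ' : Measurable Φ') (hfin' : ∫⁻ ω, Φ' ω ∂π ≠ ⊤) :
    jj π p a K ι (fun ω => Φ ω + Φ' ω) ≤ jj π p a K ι Φ + jj π p a K ι Φ' := by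
  unfold jj
  refine le_trans (le_of_eq ?_) (JJ_add_le ha ha0 hK (measurable_ff hp hΦ) (measurable_ff hp hΦ')
    (ff_ne_top hp hp1 hΦ hfin) (ff_ne_top hp hp1 hΦ' hfin'))
  congr 1
  ext z
  unfold ff
  rw [← lintegral_add_left]
  · simp only [add_mul]
  · exact hΦ.mul ((measurable_q hp).comp (measurable_prodMk_left (x := z)))

lemma jj_lsc (ha : Measurable a) (hK : Measurable (Function.uncurry K))
    (hp : Measurable (Function.uncurry p)) (hp1 : ∀ ω, ∫⁻ v, p ω v ≤ 1)
    {Ψ : ℕ → Ω → ℝ≥0∞} (hΨ : ∀ n, Measurable (Ψ n)) (hΦ : Measurable Φ)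
    {C : ℝ≥0∞} (hC : C ≠ ⊤) (hb : ∀ n ω, Ψ n ω ≤ C)
    (hlim : ∀ᵐ ω ∂π, Filter.Tendsto (fun n => Ψ n ω) Filter.atTop (nhds (Φ ω))) :
    jj π p a K ι Φ ≤ Filter.liminf (fun n => jj π p a K ι (Ψ n)) Filter.atTop := by
  have hΦC : ∀ᵐ ω ∂π, Φ ω ≤ C := by
    filter_upwards [hlim] with ω h
    exact le_of_tendsto' h fun n => hb n ω
  have hCfin : ∫⁻ _ : Ω, C ∂π ≠ ⊤ := by
    simp [ENNReal.mul_eq_top, hC]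
  refine JJ_lsc ha hK (fun n => measurable_ff hp (hΨ n))
    (ff_ne_top hp hp1 hΦ (ne_top_of_le_ne_top hCfin (lintegral_mono_ae hΦC))) ?_
  have h1 := ff_ne_top (ι := ι) (π := π) hp hp1 (measurable_const (a := C)) hCfin
  filter_upwards [h1] with z hz
  have hq : Measurable fun ω => p ω z.1 * ∏ i, p ω (z.2 i) :=
    (measurable_q hp).comp (measurable_prodMk_left (x := z))
  refine tendsto_lintegral_of_dominated_convergence (fun ω => C * (p ω z.1 * ∏ i, p ω (z.2 i)))
    (fun n => (hΨ n).mul hq) ?_ hz ?_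
  · intro n
    exact Filter.Eventually.of_forall fun ω => mul_le_mul_left (hb n ω) _
  · rcases eq_or_ne C 0 with h0 | h0
    · filter_upwards [hlim, hΦC] with ω h h'
      have : Φ ω = 0 := by simpa [h0] using h'
      have h2 : ∀ n, Ψ n ω = 0 := fun n => by simpa [h0] using hb n ω
      simp [this, h2]
    · have hm : Measurable (fun ω => C * (p ω z.1 * ∏ i, p ω (z.2 i))) := by fun_prop
      filter_upwards [hlim, ae_lt_top hm hz] with ω h h'
      refine ENNReal.Tendsto.mul_const h (Or.inr ?_)
      rintro h3
      rw [h3, ENNReal.mul_top h0] at h'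
      exact lt_irrefl _ h'

lemma jj_reindex (e : ι ≃ ι') : jj π p a K ι Φ = jj π p a K ι' Φ := by
  unfold jj
  rw [← JJ_comp a K _ (volume_measurePreserving_piCongrLeft (fun _ : ι' => E) e)]
  congr 1
  ext z
  unfold ff
  refine lintegral_congr fun ω => ?_
  dsimp only
  congr 2
  rw [← e.prod_comp]
  refine Finset.prod_congr rfl fun i _ => ?_
  congr 1
  exact (MeasurableEquiv.piCongrLeft_apply_apply (β := fun _ : ι' => E) (e := e) z.2 i).symm

lemma jj_split (ha : Measurable a) (ha0 : ∀ v, 0 ≤ a v) (hK : Measurable (Function.uncurry K))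
    (hp : Measurable (Function.uncurry p)) (hp1 : ∀ ω, ∫⁻ v, p ω v ≤ 1)
    (hΦ : Measurable Φ) (hfin : ∫⁻ ω, Φ ω ∂π ≠ ⊤)
    {ψ ψ' : (ι' → E) → ℝ≥0∞} (hψ : Measurable ψ) (hψ' : Measurable ψ')
    (hsum : ∀ y, ψ y + ψ' y = 1) :
    jj π p a K ι (fun ω => Φ ω * ∫⁻ y : ι' → E, ψ y * ∏ i, p ω (y i))
      + jj π p a K ι (fun ω => Φ ω * ∫⁻ y : ι' → E, ψ' y * ∏ i, p ω (y i))
      ≤ jj π p a K (ι ⊕ ι') Φ := by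
  unfold jj
  rw [← JJ_comp a K _ (volume_measurePreserving_sumPiEquivProdPi_symm (fun _ : ι ⊕ ι' => E))]
  set h : E × ((ι → E) × (ι' → E)) → ℝ≥0∞ := fun z => ff π p (ι ⊕ ι') Φ (z.1, (MeasurableEquiv.sumPiEquivProdPi fun _ => E).symm z.2) with hdef
  have hh : Measurable h := (measurable_ff hp hΦ).comp (by fun_prop)
  have hexp : ∀ v x y, h (v, (x, y)) =
      ∫⁻ ω, Φ ω * (p ω v * ∏ i, p ω (x i)) * ∏ i, p ω (y i) ∂π := by
    intro v x y
    simp only [hdef, ff]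
    refine lintegral_congr fun ω => ?_
    rw [Fintype.prod_sum_type]
    simp only [mul_assoc]
    rfl
  have hmy : ∀ z : E × (ι → E), Measurable fun q : (ι' → E) × Ω =>
      Φ q.2 * (p q.2 z.1 * ∏ i, p q.2 (z.2 i)) * ∏ i, p q.2 (q.1 i) := by
    intro z
    have hq : Measurable fun ω => p ω z.1 * ∏ i, p ω (z.2 i) :=
      (measurable_q hp).comp (measurable_prodMk_left (x := z))
    refine Measurable.mul (by fun_prop) (Finset.measurable_prod _ fun i _ => ?_)
    exact hp.comp (f := fun q : (ι' → E) × Ω => (q.2, q.1 i)) (by fun_prop)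
  have hmq : ∀ ω, Measurable fun y : ι' → E => ∏ i, p ω (y i) := fun ω =>
      Finset.measurable_prod _ fun i _ => (measurable_p hp ω).comp (measurable_pi_apply i)
  have key : ∀ (φ : (ι' → E) → ℝ≥0∞), Measurable φ → ∀ z : E × (ι → E),
      ∫⁻ y, h (z.1, (z.2, y)) * φ y
        = ff π p ι (fun ω => Φ ω * ∫⁻ y : ι' → E, φ y * ∏ i, p ω (y i)) z := by
    intro φ hφ z
    simp only [hexp]
    have hq : Measurable fun ω => p ω z.1 * ∏ i, p ω (z.2 i) :=
      (measurable_q hp).comp (measurable_prodMk_left (x := z))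
    have : ∀ y, (∫⁻ ω, Φ ω * (p ω z.1 * ∏ i, p ω (z.2 i)) * ∏ i, p ω (y i) ∂π) * φ y
        = ∫⁻ ω, Φ ω * (p ω z.1 * ∏ i, p ω (z.2 i)) * (∏ i, p ω (y i)) * φ y ∂π := by
      intro y
      rw [lintegral_mul_const]
      exact (hmy z).comp (measurable_prodMk_left (x := y))
    simp only [this]
    rw [lintegral_lintegral_swap ((hmy z).mul (hφ.comp measurable_fst)).aemeasurable]
    unfold ff
    refine lintegral_congr fun ω => ?_
    have : ∀ y : ι' → E, Φ ω * (p ω z.1 * ∏ i, p ω (z.2 i)) * (∏ i, p ω (y i)) * φ y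
      = Φ ω * (p ω z.1 * ∏ i, p ω (z.2 i)) * (φ y * ∏ i, p ω (y i)) := by intro y; ring
    simp only [this]
    have hmm : Measurable fun y : ι' → E => φ y * ∏ i, p ω (y i) := hφ.mul (hmq ω)
    rw [lintegral_const_mul _ hmm]
    ring
  have hpi1 : ∀ ω, ∫⁻ y : ι' → E, ∏ i, p ω (y i) ≤ 1 := by
    intro ω
    rw [lintegral_pi_prod _ (fun i => measurable_p hp ω)]
    exact (Finset.prod_le_one' fun i _ => hp1 ω)
  have hk1 := key (fun _ => 1) measurable_const
  simp only [mul_one, one_mul] at hk1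
  have hfin2 : ∀ᵐ z : E × (ι → E) ∂((volume : Measure E).prod (volume : Measure (ι → E))),
      ∫⁻ y, h (z.1, (z.2, y)) ≠ ⊤ := by
    simp only [hk1]
    refine ff_ne_top hp hp1 (hΦ.mul ?_) (ne_top_of_le_ne_top hfin (lintegral_mono fun ω => ?_))
    · have : Measurable fun q : Ω × (ι' → E) => ∏ i, p q.1 (q.2 i) :=
        Finset.measurable_prod _ fun i _ => hp.comp (f := fun q : Ω × (ι' → E) => (q.1, q.2 i)) (by fun_prop)
      exact this.lintegral_prod_right'
    · exact mul_le_of_le_one_right' (hpi1 ω)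
  have := JJ_split ha ha0 hK hh hfin2 hψ hψ' hsum
  simp only [key ψ hψ, key ψ' hψ'] at this
  exact this

end mix
end St14

/-! ### Part 3: approximation of indicator functions by polynomials -/
set_option linter.unusedSectionVars false
set_option linter.unusedVariables false
namespace St14
section app
variable {E : Type*} [MeasurableSpace E] {Ω : Type*} [MeasurableSpace Ω]

lemma measurable_pi_measure {R : Ω → Measure E} [∀ ω, IsProbabilityMeasure (R ω)]
    (hR : Measurable R) (ι : Type*) [Fintype ι] :
    Measurable fun ω => Measure.pi fun _ : ι => R ω := by
  refine Measurable.measure_of_isPiSystem_of_isProbabilityMeasure generateFrom_pi.symm isPiSystem_pi ?_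
  rintro s ⟨t, ht, rfl⟩
  simp only [Measure.pi_pi]
  exact Finset.measurable_prod _ fun i _ => (Measure.measurable_coe (ht i (Set.mem_univ i))).comp hR

def IsTest (R : Ω → Measure E) (T : Ω → ℝ) : Prop :=
  ∃ (ι : Type) (_ : Fintype ι) (ψ : (ι → E) → ℝ), Measurable ψ ∧ (∀ y, 0 ≤ ψ y ∧ ψ y ≤ 1) ∧
    ∀ ω, T ω = ∫ y, ψ y ∂(Measure.pi fun _ : ι => R ω)

variable {R : Ω → Measure E} [∀ ω, IsProbabilityMeasure (R ω)] {T T' : Ω → ℝ}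

lemma integrable_bdd {Y : Type*} [MeasurableSpace Y] (η : Measure Y) [IsFiniteMeasure η] {ψ : Y → ℝ}
    (hψ : Measurable ψ) (hb : ∀ y, 0 ≤ ψ y ∧ ψ y ≤ 1) : Integrable ψ η := by
  refine Integrable.of_bound hψ.aestronglyMeasurable 1 (Filter.Eventually.of_forall fun y => ?_)
  rw [Real.norm_eq_abs, abs_of_nonneg (hb y).1]
  exact (hb y).2

lemma IsTest.bdd (h : IsTest R T) (ω : Ω) : 0 ≤ T ω ∧ T ω ≤ 1 := by
  obtain ⟨ι, _, ψ, hψ, hb, hT⟩ := h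
  rw [hT]
  refine ⟨integral_nonneg fun y => (hb y).1, ?_⟩
  calc _ ≤ ∫ y, (1 : ℝ) ∂(Measure.pi fun _ : ι => R ω) :=
        integral_mono (integrable_bdd _ hψ hb) (integrable_const _) fun y => (hb y).2
    _ = 1 := by simp

lemma IsTest.measurable (hR : Measurable R) (h : IsTest R T) : Measurable T := by
  obtain ⟨ι, _, ψ, hψ, hb, hT⟩ := h
  have : T = fun ω => (∫⁻ y, ENNReal.ofReal (ψ y) ∂(Measure.pi fun _ : ι => R ω)).toReal := by
    ext ω
    rw [hT, integral_eq_lintegral_of_nonneg_ae (Filter.Eventually.of_forall fun y => (hb y).1)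
      hψ.aestronglyMeasurable]
  rw [this]
  exact ((Measure.measurable_lintegral hψ.ennreal_ofReal).comp
    (measurable_pi_measure hR ι)).ennreal_toReal

lemma IsTest.one_sub (h : IsTest R T) : IsTest R (fun ω => 1 - T ω) := by
  obtain ⟨ι, _, ψ, hψ, hb, hT⟩ := h
  refine ⟨ι, inferInstance, fun y => 1 - ψ y, by fun_prop, fun y => ?_, fun ω => ?_⟩
  · have := hb y
    constructor <;> linarith
  · dsimp only
    rw [integral_sub (integrable_const _) (integrable_bdd _ hψ hb), hT]
    simp

lemma IsTest.mul (h : IsTest R T) (h' : IsTest R T') : IsTest R (fun ω => T ω * T' ω) := by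
  obtain ⟨ι, _, ψ, hψ, hb, hT⟩ := h
  obtain ⟨ι', _, ψ', hψ', hb', hT'⟩ := h'
  refine ⟨ι ⊕ ι', inferInstance, fun y => ψ (fun i => y (Sum.inl i)) * ψ' (fun i => y (Sum.inr i)),
    ?_, fun y => ?_, fun ω => ?_⟩
  · exact (hψ.comp (by fun_prop)).mul (hψ'.comp (by fun_prop))
  · have h1 := hb (fun i => y (Sum.inl i))
    have h2 := hb' (fun i => y (Sum.inr i))
    exact ⟨mul_nonneg h1.1 h2.1, mul_le_one₀ h1.2 h2.1 h2.2⟩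
  · dsimp only
    rw [hT, hT', ← integral_prod_mul]
    rw [← (measurePreserving_sumPiEquivProdPi (fun _ : ι ⊕ ι' => R ω)).integral_comp
      (MeasurableEquiv.measurableEmbedding _)]
    rfl

lemma isTest_eval {S : Set E} (hS : MeasurableSet S) : IsTest R (fun ω => (R ω).real S) := by
  refine ⟨Unit, inferInstance, fun y => S.indicator (fun _ => (1 : ℝ)) (y ()), ?_, fun y => ?_,
    fun ω => ?_⟩
  · exact (measurable_const.indicator hS).comp (measurable_pi_apply _)
  · by_cases h : y () ∈ S <;> simp [h]
  · have := integral_map (μ := Measure.pi fun _ : Unit => R ω) (φ := fun y : Unit → E => y ())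
      (measurable_pi_apply _).aemeasurable
      (f := S.indicator (fun _ => (1 : ℝ))) ((measurable_const.indicator hS).aestronglyMeasurable)
    rw [← this]
    have e : Measure.map (fun y : Unit → E => y ()) (Measure.pi fun _ : Unit => R ω) = R ω :=
      (measurePreserving_eval (fun _ : Unit => R ω) ()).map_eq
    rw [e, integral_indicator hS]
    simp

variable (π : Measure Ω) [IsFiniteMeasure π]

def App (R : Ω → Measure E) (Φ : Ω → ℝ) : Prop :=
  Measurable Φ ∧ (∀ ω, 0 ≤ Φ ω ∧ Φ ω ≤ 1) ∧
    ∀ ε : ℝ≥0∞, 0 < ε → ∃ T, IsTest R T ∧ ∫⁻ ω, ‖Φ ω - T ω‖ₑ ∂π < ε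

variable {π} {Φ Φ' : Ω → ℝ}

lemma app_of_test (hR : Measurable R) (h : IsTest R T) : App π R T :=
  ⟨h.measurable hR, h.bdd, fun ε hε => ⟨T, h, by simpa using hε⟩⟩

lemma App.one_sub (h : App π R Φ) : App π R (fun ω => 1 - Φ ω) := by
  obtain ⟨hm, hb, happ⟩ := h
  refine ⟨by fun_prop, fun ω => ?_, fun ε hε => ?_⟩
  · have := hb ω
    constructor <;> linarith
  · obtain ⟨T, hT, hlt⟩ := happ ε hε
    refine ⟨_, hT.one_sub, lt_of_eq_of_lt (lintegral_congr fun ω => ?_) hlt⟩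
    rw [← enorm_neg]
    congr 1
    ring

lemma App.mul (hR : Measurable R) (h : App π R Φ) (h' : App π R Φ') :
    App π R (fun ω => Φ ω * Φ' ω) := by
  obtain ⟨hm, hb, happ⟩ := h
  obtain ⟨hm', hb', happ'⟩ := h'
  refine ⟨by fun_prop, fun ω => ?_, fun ε hε => ?_⟩
  · exact ⟨mul_nonneg (hb ω).1 (hb' ω).1, mul_le_one₀ (hb ω).2 (hb' ω).1 (hb' ω).2⟩
  · obtain ⟨T, hT, hlt⟩ := happ (ε / 2) (ENNReal.half_pos hε.ne')
    obtain ⟨T', hT', hlt'⟩ := happ' (ε / 2) (ENNReal.half_pos hε.ne')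
    refine ⟨_, hT.mul hT', ?_⟩
    have hTm := hT.measurable hR
    calc _ ≤ ∫⁻ ω, (‖Φ ω - T ω‖ₑ + ‖Φ' ω - T' ω‖ₑ) ∂π := by
          refine lintegral_mono fun ω => ?_
          have e : Φ ω * Φ' ω - T ω * T' ω = (Φ ω - T ω) * Φ' ω + T ω * (Φ' ω - T' ω) := by ring
          rw [e]
          refine (enorm_add_le _ _).trans ?_
          rw [enorm_mul, enorm_mul]
          have h1 : ‖Φ' ω‖ₑ ≤ 1 := by
            rw [Real.enorm_eq_ofReal (hb' ω).1]; exact ENNReal.ofReal_le_one.2 (hb' ω).2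
          have h2 : ‖T ω‖ₑ ≤ 1 := by
            rw [Real.enorm_eq_ofReal (hT.bdd ω).1]; exact ENNReal.ofReal_le_one.2 (hT.bdd ω).2
          exact add_le_add (mul_le_of_le_one_right' h1) (mul_le_of_le_one_left' h2)
      _ = ∫⁻ ω, ‖Φ ω - T ω‖ₑ ∂π + ∫⁻ ω, ‖Φ' ω - T' ω‖ₑ ∂π := by
          rw [lintegral_add_left (by fun_prop)]
      _ < ε / 2 + ε / 2 := ENNReal.add_lt_add hlt hlt'
      _ = ε := ENNReal.add_halves ε

lemma app_one (hR : Measurable R) : App π R (fun _ => 1) := by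
  have := app_of_test (π := π) hR (isTest_eval (R := R) MeasurableSet.univ)
  simpa using this

lemma App.pow (hR : Measurable R) (h : App π R Φ) (n : ℕ) : App π R (fun ω => Φ ω ^ n) := by
  induction n with
  | zero => simpa using app_one hR
  | succ n ih => simpa only [pow_succ] using ih.mul hR h

lemma app_lim (hR : Measurable R) {Ψ : ℕ → Ω → ℝ} (hΨ : ∀ n, App π R (Ψ n))
    (hlim : ∀ ω, Filter.Tendsto (fun n => Ψ n ω) Filter.atTop (nhds (Φ ω))) : App π R Φ := by
  have hm : Measurable Φ := measurable_of_tendsto_metrizable (fun n => (hΨ n).1) (tendsto_pi_nhds.2 hlim)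
  have hb : ∀ ω, 0 ≤ Φ ω ∧ Φ ω ≤ 1 := fun ω =>
    ⟨ge_of_tendsto' (hlim ω) fun n => ((hΨ n).2.1 ω).1, le_of_tendsto' (hlim ω) fun n => ((hΨ n).2.1 ω).2⟩
  refine ⟨hm, hb, fun ε hε => ?_⟩
  have ht : Filter.Tendsto (fun n => ∫⁻ ω, ‖Φ ω - Ψ n ω‖ₑ ∂π) Filter.atTop (nhds 0) := by
    have : (0 : ℝ≥0∞) = ∫⁻ ω, 0 ∂π := by simp
    rw [this]
    refine tendsto_lintegral_of_dominated_convergence (fun _ => 1) (fun n => ?_) (fun n => ?_) ?_ ?_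
    · have := (hΨ n).1
      fun_prop
    · refine Filter.Eventually.of_forall fun ω => ?_
      have h1 := hb ω
      have h2 := (hΨ n).2.1 ω
      show ‖Φ ω - Ψ n ω‖ₑ ≤ 1
      rw [Real.enorm_eq_ofReal_abs, ENNReal.ofReal_le_one, abs_le]
      constructor <;> linarith
    · simp
    · refine Filter.Eventually.of_forall fun ω => ?_
      have h3 : Filter.Tendsto (fun n => Φ ω - Ψ n ω) Filter.atTop (nhds (Φ ω - Φ ω)) :=
        (hlim ω).const_sub _
      have := (continuous_enorm.tendsto _).comp h3
      simpa [Function.comp_def] using this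
  obtain ⟨n, hn⟩ := (ht.eventually (gt_mem_nhds (ENNReal.half_pos hε.ne'))).exists
  obtain ⟨T, hT, hlt⟩ := (hΨ n).2.2 (ε / 2) (ENNReal.half_pos hε.ne')
  refine ⟨T, hT, ?_⟩
  have hn1 := (hΨ n).1
  calc _ ≤ ∫⁻ ω, (‖Φ ω - Ψ n ω‖ₑ + ‖Ψ n ω - T ω‖ₑ) ∂π := by
        refine lintegral_mono fun ω => ?_
        have e : Φ ω - T ω = (Φ ω - Ψ n ω) + (Ψ n ω - T ω) := by ring
        rw [e]
        exact enorm_add_le _ _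
    _ = ∫⁻ ω, ‖Φ ω - Ψ n ω‖ₑ ∂π + ∫⁻ ω, ‖Ψ n ω - T ω‖ₑ ∂π := by
        rw [lintegral_add_left (by fun_prop)]
    _ < ε / 2 + ε / 2 := ENNReal.add_lt_add hn hlt
    _ = ε := ENNReal.add_halves ε

/-- threshold polynomials -/
lemma threshold_tendsto {x c : ℝ} (hx0 : 0 ≤ x) (hx1 : x ≤ 1) (hc0 : 0 < c) (hc1 : c ≤ 1) :
    Filter.Tendsto (fun n : ℕ => 1 - (1 - x ^ n) ^ ⌈n * (c⁻¹) ^ n⌉₊) Filter.atTop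
      (nhds ((Set.Ici c).indicator (fun _ => (1 : ℝ)) x)) := by
  have hpow0 : ∀ n : ℕ, 0 ≤ x ^ n := fun n => by positivity
  have hpow1 : ∀ n : ℕ, x ^ n ≤ 1 := fun n => pow_le_one₀ hx0 hx1
  by_cases hxc : c ≤ x
  · rw [Set.indicator_of_mem (by exact hxc)]
    have : Filter.Tendsto (fun n : ℕ => (1 - x ^ n) ^ ⌈n * (c⁻¹) ^ n⌉₊) Filter.atTop (nhds 0) := by
      refine squeeze_zero (g := fun n : ℕ => Real.exp (-n)) (fun n => ?_) (fun n => ?_) ?_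
      · exact pow_nonneg (by linarith [hpow1 n]) _
      · calc (1 - x ^ n) ^ ⌈n * (c⁻¹) ^ n⌉₊ ≤ (Real.exp (-x ^ n)) ^ ⌈n * (c⁻¹) ^ n⌉₊ := by
              refine pow_le_pow_left₀ (by linarith [hpow1 n]) ?_ _
              linarith [Real.add_one_le_exp (-x ^ n)]
          _ = Real.exp (-(⌈n * (c⁻¹) ^ n⌉₊ * x ^ n)) := by
              rw [← Real.exp_nat_mul]; congr 1; ring
          _ ≤ _ := by
              refine Real.exp_le_exp.2 (neg_le_neg ?_)
              calc (n : ℝ) = n * (c⁻¹) ^ n * c ^ n := by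
                    rw [mul_assoc, ← mul_pow, inv_mul_cancel₀ hc0.ne', one_pow, mul_one]
                _ ≤ ⌈n * (c⁻¹) ^ n⌉₊ * x ^ n := by
                    gcongr
                    exact Nat.le_ceil _
      · exact Real.tendsto_exp_atBot.comp (Filter.tendsto_neg_atTop_atBot.comp tendsto_natCast_atTop_atTop)
    simpa using this.const_sub 1
  · rw [Set.indicator_of_notMem (by exact hxc)]
    push Not at hxc
    refine squeeze_zero (g := fun n : ℕ => n * (x / c) ^ n + x ^ n)
      (fun n => ?_) (fun n => ?_) ?_
    · have : (1 - x ^ n) ^ ⌈n * (c⁻¹) ^ n⌉₊ ≤ 1 :=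
        pow_le_one₀ (by linarith [hpow1 n]) (by linarith [hpow0 n])
      linarith
    · have h1 := one_add_mul_le_pow (a := -x ^ n) (by linarith [hpow1 n]) ⌈n * (c⁻¹) ^ n⌉₊
      have h2 : (⌈n * (c⁻¹) ^ n⌉₊ : ℝ) ≤ n * (c⁻¹) ^ n + 1 := (Nat.ceil_lt_add_one (by positivity)).le
      have h3 : (⌈n * (c⁻¹) ^ n⌉₊ : ℝ) * x ^ n ≤ (n * (c⁻¹) ^ n + 1) * x ^ n := by gcongr
      have h4 : (n * (c⁻¹) ^ n + 1) * x ^ n = n * (x / c) ^ n + x ^ n := by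
        rw [div_eq_mul_inv, mul_pow]; ring
      have h6 : 1 + -x ^ n = 1 - x ^ n := by ring
      rw [h6] at h1
      linarith
    · have e1 := tendsto_self_mul_const_pow_of_lt_one (r := x / c) (by positivity)
        ((div_lt_one hc0).2 hxc)
      have e2 := tendsto_pow_atTop_nhds_zero_of_lt_one hx0 (hxc.trans_le hc1)
      simpa using e1.add e2

lemma app_threshold (hR : Measurable R) {S : Set E} (hS : MeasurableSet S) {c : ℝ} (hc : 0 < c) :
    App π R ({ω | c ≤ (R ω).real S}.indicator (fun _ => 1)) := by
  have hx : App π R (fun ω => (R ω).real S) := app_of_test hR (isTest_eval hS)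
  by_cases hc1 : c ≤ 1
  swap
  · convert (app_one (π := π) hR).one_sub using 1
    ext ω
    have : ¬ c ≤ (R ω).real S := fun h => hc1 (h.trans (hx.2.1 ω).2)
    simp [this]
  refine app_lim hR (Ψ := fun n ω => 1 - (1 - ((R ω).real S) ^ n) ^ ⌈n * (c⁻¹) ^ n⌉₊)
    (fun n => ((((hx.pow hR n).one_sub).pow hR _)).one_sub) fun ω => ?_
  exact threshold_tendsto (x := (R ω).real S) (hx.2.1 ω).1 (hx.2.1 ω).2 hc hc1

lemma app_compl {B : Set Ω} (h : App π R (B.indicator fun _ => 1)) :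
    App π R (Bᶜ.indicator fun _ => 1) := by
  convert h.one_sub using 1
  ext ω
  by_cases hω : ω ∈ B <;> simp [hω]

lemma app_iUnion (hR : Measurable R) {B : ℕ → Set Ω} (h : ∀ n, App π R ((B n).indicator fun _ => 1)) :
    App π R ((⋃ n, B n).indicator fun _ => 1) := by
  have h1 : ∀ n, App π R (fun ω => ∏ i ∈ Finset.range n, (1 - (B i).indicator (fun _ => (1:ℝ)) ω)) := by
    intro n
    induction n with
    | zero => simpa using app_one hR
    | succ n ih => 
      simp only [Finset.prod_range_succ]
      exact ih.mul hR (h n).one_sub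
  have h2 : App π R ((⋃ n, B n)ᶜ.indicator fun _ => 1) := by
    refine app_lim hR h1 fun ω => ?_
    by_cases hω : ω ∈ ⋃ n, B n
    · rw [Set.indicator_of_notMem (by simpa using hω)]
      obtain ⟨k, hk⟩ := Set.mem_iUnion.1 hω
      refine tendsto_const_nhds.congr' ?_
      filter_upwards [Filter.eventually_gt_atTop k] with n hn
      refine (Finset.prod_eq_zero (Finset.mem_range.2 hn) ?_).symm
      simp [hk]
    · rw [Set.indicator_of_mem (by simpa using hω)]
      refine tendsto_const_nhds.congr fun n => ?_
      refine (Finset.prod_eq_one fun i _ => ?_).symm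
      simp only [Set.mem_iUnion, not_exists] at hω
      simp [hω i]
  simpa using app_compl h2

lemma app_of_measurableSet (hR : Measurable R) {B : Set Ω}
    (hB : MeasurableSet[MeasurableSpace.comap R inferInstance] B) :
    App π R (B.indicator fun _ => 1) := by
  have key : ∀ s, MeasurableSet s → ∀ c : ℝ≥0∞,
      App π R (((fun ω => R ω s) ⁻¹' Set.Ici c).indicator fun _ => 1) := by
    intro s hs c
    by_cases hc0 : c = 0
    · convert app_one (π := π) hR using 1
      ext ω
      simp [hc0]
    by_cases hct : c = ⊤
    · convert (app_one (π := π) hR).one_sub using 1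
      ext ω
      simp [hct]
    have hc : 0 < c.toReal := ENNReal.toReal_pos hc0 hct
    convert app_threshold (π := π) hR hs hc using 2
    ext ω
    simp only [Set.mem_preimage, Set.mem_Ici, Set.mem_ofPred_eq, Measure.real]
    rw [ENNReal.toReal_le_toReal hct (measure_ne_top _ _)]
  have h0 : App π R ((∅ : Set Ω).indicator fun _ => 1) := by
    have := app_compl (π := π) (R := R) (B := Set.univ) (by simpa using app_one hR)
    simpa using this
  have hRm := @Measure.measurable_of_measurable_coe _ _ _
    { MeasurableSet' := fun B => App π R (B.indicator fun _ => 1)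
      measurableSet_empty := h0
      measurableSet_compl := fun B h => app_compl h
      measurableSet_iUnion := fun f h => app_iUnion hR h } R
    (fun s hs => @measurable_of_Ici _ _ _ _ _ (_) _ _ _ _ fun c => key s hs c)
  obtain ⟨t, ht, rfl⟩ := hB
  exact hRm ht

end app
end St14

/-! ### Part 4: measurability facts -/
set_option linter.unusedSectionVars false
set_option linter.unusedVariables false
namespace St14
section meas

lemma measurable_coe_pm (d : ℕ) :
    Measurable (fun ρ : ProbabilityMeasure (Euc d) => (ρ : Measure (Euc d))) := by
  haveI : BorelSpace (ProbabilityMeasure (Euc d)) := ⟨rfl⟩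
  refine Measurable.measure_of_isPiSystem_of_isProbabilityMeasure
    (S := {s : Set (Euc d) | IsOpen s}) ?_ isPiSystem_isOpen ?_
  · exact BorelSpace.measurable_eq
  · intro s hs
    have : LowerSemicontinuous fun ρ : ProbabilityMeasure (Euc d) => (ρ : Measure (Euc d)) s := by
      rw [lowerSemicontinuous_iff_le_liminf]
      intro ρ
      exact ProbabilityMeasure.le_liminf_measure_open_of_tendsto Filter.tendsto_id hs
    exact this.measurable

lemma exists_density {E : Type*} [MeasureSpace E] [SigmaFinite (volume : Measure E)]
    [MeasurableSpace.CountablyGenerated E] {Ω : Type*} [MeasurableSpace Ω]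
    {R : Ω → Measure E} [∀ ω, IsProbabilityMeasure (R ω)] (hR : Measurable R) :
    ∃ p : Ω → E → ℝ≥0∞, Measurable (Function.uncurry p) ∧ (∀ ω, ∫⁻ v, p ω v ≤ 1) ∧
      ∀ ω, R ω ≪ volume → R ω = volume.withDensity (p ω) := by
  let κ : ProbabilityTheory.Kernel Ω E := ⟨R, hR⟩
  let μ := (volume : Measure E).toFinite
  let η : ProbabilityTheory.Kernel Ω E := ProbabilityTheory.Kernel.const Ω μ
  haveI : ProbabilityTheory.IsMarkovKernel κ := ⟨fun ω => inferInstanceAs (IsProbabilityMeasure (R ω))⟩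
  let h := μ.rnDeriv volume
  have hh : Measurable h := Measure.measurable_rnDeriv _ _
  have hμ : μ = volume.withDensity h :=
    (Measure.withDensity_rnDeriv_eq μ volume (toFinite_absolutelyContinuous _)).symm
  let q : Ω → E → ℝ≥0∞ := fun ω v => h v * ProbabilityTheory.Kernel.rnDeriv κ η ω v
  have hq : Measurable (Function.uncurry q) :=
    (hh.comp measurable_snd).mul (ProbabilityTheory.Kernel.measurable_rnDeriv κ η)
  have hI : Measurable fun ω => ∫⁻ v, q ω v := hq.lintegral_prod_right'
  have hset : MeasurableSet {ω | ∫⁻ v, q ω v ≤ 1} := measurableSet_le hI measurable_const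
  classical
  refine ⟨fun ω v => {ω | ∫⁻ v, q ω v ≤ 1}.indicator (fun ω => q ω v) ω, ?_, ?_, ?_⟩
  · have : (Function.uncurry fun ω v => {ω | ∫⁻ v, q ω v ≤ 1}.indicator (fun ω => q ω v) ω)
        = (Prod.fst ⁻¹' {ω | ∫⁻ v, q ω v ≤ 1}).indicator (Function.uncurry q) := by
      ext ⟨ω, v⟩
      simp [Set.indicator, Function.uncurry]
    rw [this]
    exact hq.indicator (measurable_fst hset)
  · intro ω
    by_cases hω : ω ∈ {ω | ∫⁻ v, q ω v ≤ 1}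
    · simp only [Set.indicator_of_mem hω]
      exact hω
    · simp only [Set.indicator_of_notMem hω]
      simp
  · intro ω hac
    have e1 : R ω = volume.withDensity (q ω) := by
      have h1 : κ ω ≪ η ω := hac.trans (absolutelyContinuous_toFinite _)
      have h2 := ProbabilityTheory.Kernel.withDensity_rnDeriv_eq h1
      rw [ProbabilityTheory.Kernel.withDensity_apply _ (ProbabilityTheory.Kernel.measurable_rnDeriv κ η)] at h2
      have h3 : η ω = volume.withDensity h := hμ
      rw [h3, ← withDensity_mul _ hh (ProbabilityTheory.Kernel.measurable_rnDeriv_right κ η ω)] at h2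
      exact h2.symm
    have hω : ω ∈ {ω | ∫⁻ v, q ω v ≤ 1} := by
      show ∫⁻ v, q ω v ≤ 1
      have : R ω Set.univ = ∫⁻ v, q ω v := by
        rw [e1]; simp
      rw [← this]; simp
    simp only [Set.indicator_of_mem hω]
    exact e1

end meas
end St14

/-! ### Part 5: the Wasserstein ball is measurable -/
namespace St14
section wass
variable {d : ℕ}

lemma exists_lip_seq (d : ℕ) : ∃ u : ℕ → Euc d → ℝ, (∀ n, LipschitzWith 1 (u n) ∧ u n 0 = 0) ∧
    ∀ φ : Euc d → ℝ, LipschitzWith 1 φ → φ 0 = 0 → ∃ k : ℕ → ℕ,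
      ∀ x, Filter.Tendsto (fun n => u (k n) x) Filter.atTop (nhds (φ x)) := by
  let S : Set C(Euc d, ℝ) := {φ | LipschitzWith 1 φ ∧ φ 0 = 0}
  have hne : Nonempty S := ⟨⟨0, ⟨LipschitzWith.const' 0, rfl⟩⟩⟩
  obtain ⟨u, hu⟩ := TopologicalSpace.exists_dense_seq S
  refine ⟨fun n => (u n).1, fun n => (u n).2, fun φ hφ hφ0 => ?_⟩
  let φ' : S := ⟨⟨φ, hφ.continuous⟩, hφ, hφ0⟩
  obtain ⟨x, hx, hlim⟩ := mem_closure_iff_seq_limit.1 (hu φ')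
  choose k hk using hx
  refine ⟨k, fun v => ?_⟩
  have h1 : Continuous fun s : S => s.1 v :=
    (ContinuousEvalConst.continuous_eval_const (F := C(Euc d, ℝ)) v).comp continuous_subtype_val
  have h2 := (h1.tendsto φ').comp hlim
  simp only [Function.comp_def, ← hk] at h2
  exact h2

lemma lip_bound {φ : Euc d → ℝ} (h : LipschitzWith 1 φ) (h0 : φ 0 = 0) (x : Euc d) : ‖φ x‖ ≤ ‖x‖ := by
  have := h.dist_le_mul x 0
  simpa [h0, dist_zero_right] using this

lemma lip_integrable {μ : Measure (Euc d)} (hμ : Integrable (fun v : Euc d => ‖v‖) μ)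
    {φ : Euc d → ℝ} (h : LipschitzWith 1 φ) (h0 : φ 0 = 0) : Integrable φ μ :=
  hμ.mono' h.continuous.aestronglyMeasurable (Filter.Eventually.of_forall fun x => lip_bound h h0 x)

lemma lip_shift {μ ν : Measure (Euc d)} [IsProbabilityMeasure μ] [IsProbabilityMeasure ν]
    (hμ : Integrable (fun v : Euc d => ‖v‖) μ) (hν : Integrable (fun v : Euc d => ‖v‖) ν)
    {φ : Euc d → ℝ} (h : LipschitzWith 1 φ) :
    ∃ ψ : Euc d → ℝ, LipschitzWith 1 ψ ∧ ψ 0 = 0 ∧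
      (∫ x, φ x ∂μ) - ∫ x, φ x ∂ν = (∫ x, ψ x ∂μ) - ∫ x, ψ x ∂ν := by
  have hl : LipschitzWith 1 (fun x => φ x - φ 0) := by
    refine LipschitzWith.of_dist_le_mul fun x y => ?_
    have := h.dist_le_mul x y
    simpa [Real.dist_eq] using this
  have e : ∀ x, φ x = (φ x - φ 0) + φ 0 := fun x => by ring
  refine ⟨fun x => φ x - φ 0, hl, by simp, ?_⟩
  have i1 := lip_integrable hμ hl (by simp)
  have i2 := lip_integrable hν hl (by simp)
  have e1 : ∫ x, φ x ∂μ = ∫ x, (φ x - φ 0) ∂μ + φ 0 := by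
    rw [integral_congr_ae (Filter.Eventually.of_forall e), integral_add i1 (integrable_const _)]
    simp
  have e2 : ∫ x, φ x ∂ν = ∫ x, (φ x - φ 0) ∂ν + φ 0 := by
    rw [integral_congr_ae (Filter.Eventually.of_forall e), integral_add i2 (integrable_const _)]
    simp
  rw [e1, e2]
  ring

lemma W1_lt_iff {u : ℕ → Euc d → ℝ} (hu : ∀ n, LipschitzWith 1 (u n) ∧ u n 0 = 0)
    (hd : ∀ φ : Euc d → ℝ, LipschitzWith 1 φ → φ 0 = 0 → ∃ k : ℕ → ℕ,
      ∀ x, Filter.Tendsto (fun n => u (k n) x) Filter.atTop (nhds (φ x)))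
    {μ ν : Measure (Euc d)} [IsProbabilityMeasure μ] [IsProbabilityMeasure ν]
    (hμ : Integrable (fun v : Euc d => ‖v‖) μ) (hν : Integrable (fun v : Euc d => ‖v‖) ν) (r : ℝ) :
    W1 μ ν < r ↔ ∃ q : ℚ, (q : ℝ) < r ∧ ∀ n, (∫ x, u n x ∂μ) - ∫ x, u n x ∂ν ≤ q := by
  unfold W1
  constructor
  · intro h
    obtain ⟨q, hq1, hq2⟩ := exists_rat_btwn h
    refine ⟨q, hq2, fun n => ?_⟩
    refine le_trans (le_csSup (a := (∫ x, u n x ∂μ) - ∫ x, u n x ∂ν) ?_ (by exact ⟨u n, (hu n).1, rfl⟩)) hq1.le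
    refine ⟨(∫ x, ‖x‖ ∂μ) + ∫ x, ‖x‖ ∂ν, ?_⟩
    rintro t ⟨φ, hφ, rfl⟩
    obtain ⟨ψ, h1, h2, h3⟩ := lip_shift hμ hν hφ
    rw [h3]
    have i1 : ∫ x, ψ x ∂μ ≤ ∫ x, ‖x‖ ∂μ := integral_mono (lip_integrable hμ h1 h2) hμ
      fun x => (Real.le_norm_self _).trans (lip_bound h1 h2 x)
    have i2 : ∫ x, - ψ x ∂ν ≤ ∫ x, ‖x‖ ∂ν := integral_mono (lip_integrable hν h1 h2).neg hν
      fun x => (neg_le_abs _).trans (lip_bound h1 h2 x)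
    rw [integral_neg] at i2
    linarith
  · rintro ⟨q, hq, h⟩
    refine lt_of_le_of_lt (csSup_le ⟨_, u 0, (hu 0).1, rfl⟩ ?_) hq
    rintro t ⟨φ, hφ, rfl⟩
    obtain ⟨ψ, h1, h2, h3⟩ := lip_shift hμ hν hφ
    rw [h3]
    obtain ⟨k, hk⟩ := hd ψ h1 h2
    have t1 : ∀ (μ : Measure (Euc d)), Integrable (fun v : Euc d => ‖v‖) μ →
        Filter.Tendsto (fun n => ∫ x, u (k n) x ∂μ) Filter.atTop (nhds (∫ x, ψ x ∂μ)) := by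
      intro μ hμ
      refine tendsto_integral_of_dominated_convergence (fun v => ‖v‖)
        (fun n => (hu _).1.continuous.aestronglyMeasurable) hμ
        (fun n => Filter.Eventually.of_forall fun x => lip_bound (hu _).1 (hu _).2 x)
        (Filter.Eventually.of_forall hk)
    exact le_of_tendsto' ((t1 μ hμ).sub (t1 ν hν)) fun n => h _

lemma norm_integrable {μ : Measure (Euc d)} {κ : ℝ} (hκ : 1 ≤ κ)
    (h : (∫⁻ v, ENNReal.ofReal (jap v ^ κ) ∂μ) < ⊤) : Integrable (fun v : Euc d => ‖v‖) μ := by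
  refine ⟨by fun_prop, ?_⟩
  rw [hasFiniteIntegral_iff_enorm]
  refine lt_of_le_of_lt (lintegral_mono fun v => ?_) h
  rw [Real.enorm_eq_ofReal (norm_nonneg v)]
  refine ENNReal.ofReal_le_ofReal ?_
  have h1 : 1 ≤ jap v := by
    unfold jap
    rw [Real.one_le_sqrt]
    nlinarith [sq_nonneg ‖v‖]
  have h2 : ‖v‖ ≤ jap v := by
    unfold jap
    exact Real.le_sqrt_of_sq_le (by linarith)
  calc ‖v‖ ≤ jap v ^ (1 : ℝ) := by simpa using h2
    _ ≤ jap v ^ κ := Real.rpow_le_rpow_of_exponent_le h1 hκ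

lemma ball_ae (π : Measure (ProbabilityMeasure (Euc d))) {κ : ℝ} (hκ : 1 ≤ κ)
    (hmom : (∫⁻ ρ : ProbabilityMeasure (Euc d),
      (∫⁻ v, ENNReal.ofReal (jap v ^ κ) ∂(ρ : Measure (Euc d))) ∂π) < ⊤)
    (f₀ : Measure (Euc d)) [IsProbabilityMeasure f₀]
    (hf₀m : (∫⁻ v, ENNReal.ofReal (jap v ^ κ) ∂f₀) < ⊤) (r : ℝ) :
    ∃ B' : Set (ProbabilityMeasure (Euc d)),
      MeasurableSet[MeasurableSpace.comap
        (fun ρ : ProbabilityMeasure (Euc d) => (ρ : Measure (Euc d))) inferInstance] B' ∧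
      {ρ : ProbabilityMeasure (Euc d) | W1 (ρ : Measure (Euc d)) f₀ < r} =ᵐ[π] B' := by
  obtain ⟨u, hu, hd⟩ := exists_lip_seq d
  let I : ℕ → Measure (Euc d) → ℝ := fun n μ =>
    (∫⁻ v, ENNReal.ofReal (u n v) ∂μ).toReal - (∫⁻ v, ENNReal.ofReal (- u n v) ∂μ).toReal
  have hI : ∀ n, Measurable (I n) := fun n => by
    have := (hu n).1.continuous.measurable
    exact (Measure.measurable_lintegral (by fun_prop)).ennreal_toReal.sub
      (Measure.measurable_lintegral (by fun_prop)).ennreal_toReal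
  let C : Set (Measure (Euc d)) :=
    ⋃ q : ℚ, {μ | (q : ℝ) < r ∧ ∀ n, I n μ - ∫ x, u n x ∂f₀ ≤ q}
  have hC : MeasurableSet C := by
    refine MeasurableSet.iUnion fun q => ?_
    have : {μ | (q : ℝ) < r ∧ ∀ n, I n μ - ∫ x, u n x ∂f₀ ≤ q}
        = {_μ : Measure (Euc d) | (q : ℝ) < r} ∩ ⋂ n, {μ | I n μ - ∫ x, u n x ∂f₀ ≤ q} := by
      ext μ
      simp
    rw [this]
    refine (MeasurableSet.const _).inter (MeasurableSet.iInter fun n => ?_)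
    exact measurableSet_le ((hI n).sub_const _) measurable_const
  refine ⟨_, ⟨C, hC, rfl⟩, ?_⟩
  have hm : Measurable fun v : Euc d => ENNReal.ofReal (jap v ^ κ) := by
    unfold jap
    fun_prop
  have hae := ae_lt_top ((Measure.measurable_lintegral hm).comp (measurable_coe_pm d)) hmom.ne
  filter_upwards [hae] with ρ hρ
  have hρi : Integrable (fun v : Euc d => ‖v‖) (ρ : Measure (Euc d)) := norm_integrable hκ hρ
  have hfi := norm_integrable hκ hf₀m
  have e : ∀ n, I n (ρ : Measure (Euc d)) = ∫ x, u n x ∂(ρ : Measure (Euc d)) := fun n =>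
    (integral_eq_lintegral_pos_part_sub_lintegral_neg_part
      (lip_integrable hρi (hu n).1 (hu n).2)).symm
  apply propext
  show W1 (ρ : Measure (Euc d)) f₀ < r ↔ (ρ : Measure (Euc d)) ∈ C
  rw [W1_lt_iff hu hd hρi hfi]
  simp only [C, Set.mem_iUnion, Set.mem_ofPred_eq, e]

end wass
end St14

/-! ### Part 6: link between `fisherInfoM` and `jj` -/
namespace St14
section link

lemma bind_density {E : Type*} [MeasureSpace E] [SigmaFinite (volume : Measure E)]
    {Ω : Type*} [MeasurableSpace Ω] {π : Measure Ω} [IsFiniteMeasure π]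
    {R : Ω → Measure E} [∀ ω, IsProbabilityMeasure (R ω)] (hR : Measurable R)
    {p : Ω → E → ℝ≥0∞} (hp : Measurable (Function.uncurry p))
    (hpR : ∀ᵐ ω ∂π, R ω = volume.withDensity (p ω)) {Φ : Ω → ℝ≥0∞} (hΦ : Measurable Φ)
    (ι : Type*) [Fintype ι] :
    (π.withDensity Φ).bind (fun ω => Measure.pi fun _ : ι => R ω)
      = volume.withDensity (fun V : ι → E => ∫⁻ ω, Φ ω * ∏ i, p ω (V i) ∂π) := by
  have hpi := measurable_pi_measure hR ι
  have hm : Measurable fun q : (ι → E) × Ω => Φ q.2 * ∏ i, p q.2 (q.1 i) := by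
    refine (hΦ.comp measurable_snd).mul (Finset.measurable_prod _ fun i _ => ?_)
    exact hp.comp (f := fun q : (ι → E) × Ω => (q.2, q.1 i)) (by fun_prop)
  ext s hs
  rw [Measure.bind_apply hs hpi.aemeasurable, withDensity_apply _ hs,
    lintegral_withDensity_eq_lintegral_mul _ hΦ (g := fun ω => Measure.pi (fun _ : ι => R ω) s)
      ((Measure.measurable_coe hs).comp hpi),
    lintegral_lintegral_swap hm.aemeasurable]
  refine lintegral_congr_ae ?_
  filter_upwards [hpR] with ω hω
  have hmp := measurable_p hp ω
  have hsf : SigmaFinite ((volume : Measure E).withDensity (p ω)) := by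
    rw [← hω]; infer_instance
  have hprod : Measurable fun V : ι → E => ∏ i, p ω (V i) :=
    Finset.measurable_prod _ fun i _ => hmp.comp (measurable_pi_apply i)
  rw [lintegral_const_mul _ hprod]
  simp only [Pi.mul_apply]
  rw [hω, pi_withDensity _ hmp, withDensity_apply _ hs]

lemma fisher_link {d n : ℕ} (ν γ : ℝ) (D : (Fin (n+1) → Euc d) → ℝ≥0∞) (hD : Measurable D)
    (g : Euc d × (Fin n → Euc d) → ℝ≥0∞) 
    (hg : ∀ i : Fin (n+1), (fun z : Euc d × (Fin n → Euc d) => D (i.insertNth z.1 z.2))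
      =ᵐ[(volume : Measure (Euc d)).prod volume] g) :
    fisherInfo d (n+1) ν γ (fun V => (D V).toReal)
      = JJ (fun v : Euc d => jap v ^ (γ/2))
        (fun v w => ENNReal.ofReal ((‖v - w‖ ^ ((d : ℝ) + ν))⁻¹)) g := by
  have hjap : Measurable fun v : Euc d => jap v ^ (γ/2) := by
    unfold jap
    fun_prop
  unfold fisherInfo
  have key : ∀ i : Fin (n+1), (∫⁻ V : Fin (n+1) → Euc d, ∫⁻ w : Euc d,
    ENNReal.ofReal ((jap (V i) ^ (γ/2) * Real.sqrt (D V).toReal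
      - jap w ^ (γ/2) * Real.sqrt (D (Function.update V i w)).toReal)^2
      / ‖V i - w‖ ^ ((d : ℝ) + ν))) = JJ (fun v : Euc d => jap v ^ (γ/2))
        (fun v w => ENNReal.ofReal ((‖v - w‖ ^ ((d : ℝ) + ν))⁻¹)) g := by
    intro i
    rw [← JJ_congr (hg i)]
    have hup : Measurable fun q : (Fin (n+1) → Euc d) × Euc d => Function.update q.1 i q.2 :=
      measurable_update'
    have hF : Measurable fun q : (Fin (n+1) → Euc d) × Euc d =>
        ENNReal.ofReal ((jap (q.1 i) ^ (γ/2) * Real.sqrt (D q.1).toReal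
          - jap q.2 ^ (γ/2) * Real.sqrt (D (Function.update q.1 i q.2)).toReal)^2
          / ‖q.1 i - q.2‖ ^ ((d : ℝ) + ν)) := by
      have h1 : Measurable fun q : (Fin (n+1) → Euc d) × Euc d => jap (q.1 i) ^ (γ/2) :=
        hjap.comp (f := fun q : (Fin (n+1) → Euc d) × Euc d => q.1 i) (by fun_prop)
      have h2 : Measurable fun q : (Fin (n+1) → Euc d) × Euc d => jap q.2 ^ (γ/2) :=
        hjap.comp measurable_snd
      have h3 := hD.comp hup
      have h4 : Measurable fun q : (Fin (n+1) → Euc d) × Euc d => D q.1 := hD.comp measurable_fst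
      have h5 : Measurable fun q : (Fin (n+1) → Euc d) × Euc d => ‖q.1 i - q.2‖ ^ ((d : ℝ) + ν) := by
        fun_prop
      simp only [Function.comp_def] at h3
      exact ((((h1.mul h4.ennreal_toReal.sqrt).sub (h2.mul h3.ennreal_toReal.sqrt)).pow_const 2).div
        h5).ennreal_ofReal
    have hF' := hF.lintegral_prod_right' (ν := (volume : Measure (Euc d)))
    have hmp := (volume_preserving_piFinSuccAbove (fun _ : Fin (n+1) => Euc d) i).symm
    rw [← hmp.lintegral_comp_emb (MeasurableEquiv.measurableEmbedding _)]
    rw [show (volume : Measure (Euc d × (Fin n → Euc d))) = (volume : Measure (Euc d)).prod volume from rfl,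
      lintegral_prod_symm]
    swap
    · exact (hF'.comp
        (MeasurableEquiv.piFinSuccAbove (fun _ : Fin (n+1) => Euc d) i).symm.measurable).aemeasurable
    unfold JJ DD
    refine lintegral_congr fun x => lintegral_congr fun v => lintegral_congr fun w => ?_
    rw [← ENNReal.ofReal_mul (sq_nonneg _), ← div_eq_mul_inv]
    simp only [MeasurableEquiv.piFinSuccAbove_symm_apply, Fin.insertNthEquiv_apply, Fin.insertNth_apply_same]
    rw [show (Fin.insertNthEquiv (fun _ : Fin (n+1) => Euc d) i) (v, x) = i.insertNth v x from rfl,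
      Fin.update_insertNth (α := fun _ : Fin (n+1) => Euc d)]
  simp only [key]
  rw [Finset.sum_const, Finset.card_univ, Fintype.card_fin, nsmul_eq_mul, ← mul_assoc,
    ENNReal.inv_mul_cancel (by simp) (by simp), one_mul]

lemma fisher_eq_jj {d n : ℕ} (ν γ : ℝ) {π : Measure (ProbabilityMeasure (Euc d))} [IsFiniteMeasure π]
    {p : ProbabilityMeasure (Euc d) → Euc d → ℝ≥0∞} (hp : Measurable (Function.uncurry p))
    (hpR : ∀ᵐ ρ : ProbabilityMeasure (Euc d) ∂π, (ρ : Measure (Euc d)) = volume.withDensity (p ρ))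
    {Φ : ProbabilityMeasure (Euc d) → ℝ≥0∞} (hΦ : Measurable Φ) :
    fisherInfoM d (n+1) ν γ (mixture d (π.withDensity Φ) (n+1))
      = jj π p (fun v : Euc d => jap v ^ (γ/2))
        (fun v w => ENNReal.ofReal ((‖v - w‖ ^ ((d : ℝ) + ν))⁻¹)) (Fin n) Φ := by
  unfold fisherInfoM mixture
  rw [bind_density (measurable_coe_pm d) hp hpR hΦ (Fin (n+1))]
  have hm : Measurable fun V : Fin (n+1) → Euc d => ∫⁻ ω, Φ ω * ∏ i, p ω (V i) ∂π := by
    have hm : Measurable fun q : (Fin (n+1) → Euc d) × ProbabilityMeasure (Euc d) =>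
        Φ q.2 * ∏ i, p q.2 (q.1 i) := by
      refine (hΦ.comp measurable_snd).mul (Finset.measurable_prod _ fun i _ => ?_)
      exact hp.comp (f := fun q : (Fin (n+1) → Euc d) × ProbabilityMeasure (Euc d) => (q.2, q.1 i))
        (by fun_prop)
    exact hm.lintegral_prod_right'
  have hae := Measure.rnDeriv_withDensity (volume : Measure (Fin (n+1) → Euc d)) hm
  refine fisher_link ν γ _ (Measure.measurable_rnDeriv _ _) _ fun i => ?_
  have hmp := (volume_preserving_piFinSuccAbove (fun _ : Fin (n+1) => Euc d) i).symm
  have h2 := hmp.quasiMeasurePreserving.ae hae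
  filter_upwards [h2] with z hz
  have e : (MeasurableEquiv.piFinSuccAbove (fun _ : Fin (n+1) => Euc d) i).symm z
    = i.insertNth z.1 z.2 := rfl
  rw [e] at hz
  rw [hz]
  unfold ff
  refine lintegral_congr fun ω => ?_
  rw [Fin.prod_univ_succAbove _ i]
  simp

end link
end St14

/-! ### Part 7: the abstract affinity result -/
set_option linter.unusedSectionVars false
set_option linter.unusedVariables false
namespace St14

lemma liminf_add_le_of {u v : ℕ → ℝ≥0∞} {S : ℝ≥0∞} (h : ∀ k, u k + v k ≤ S) :
    Filter.liminf u Filter.atTop + Filter.liminf v Filter.atTop ≤ S := by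
  rw [Filter.liminf_eq_iSup_iInf_of_nat, Filter.liminf_eq_iSup_iInf_of_nat]
  refine ENNReal.iSup_add_iSup_le fun i j => ?_
  refine le_trans (add_le_add ?_ ?_) (h (max i j))
  · exact iInf₂_le _ (le_max_left i j)
  · exact iInf₂_le _ (le_max_right i j)

section fin
variable {E : Type*} [MeasureSpace E] [SigmaFinite (volume : Measure E)]
  {Ω : Type*} [MeasurableSpace Ω] {π : Measure Ω} [IsFiniteMeasure π]
  {R : Ω → Measure E} [∀ ω, IsProbabilityMeasure (R ω)]
  {p : Ω → E → ℝ≥0∞} {a : E → ℝ} {K : E → E → ℝ≥0∞} {Φ ΦF ΦG : Ω → ℝ≥0∞} {C : ℝ≥0∞}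

lemma test_density (hp : Measurable (Function.uncurry p))
    (hpR : ∀ᵐ ω ∂π, R ω = volume.withDensity (p ω)) {ι : Type*} [Fintype ι]
    {ψ : (ι → E) → ℝ} (hψ : Measurable ψ) (hb : ∀ y, 0 ≤ ψ y ∧ ψ y ≤ 1) :
    ∀ᵐ ω ∂π, ∫⁻ y : ι → E, ENNReal.ofReal (ψ y) * ∏ i, p ω (y i)
      = ENNReal.ofReal (∫ y, ψ y ∂(Measure.pi fun _ : ι => R ω)) := by
  filter_upwards [hpR] with ω hω
  have hmp := measurable_p hp ω
  have hsf : SigmaFinite ((volume : Measure E).withDensity (p ω)) := by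
    rw [← hω]; infer_instance
  have hprod : Measurable fun V : ι → E => ∏ i, p ω (V i) :=
    Finset.measurable_prod _ fun i _ => hmp.comp (measurable_pi_apply i)
  rw [ofReal_integral_eq_lintegral_ofReal (integrable_bdd _ hψ hb)
    (Filter.Eventually.of_forall fun y => (hb y).1)]
  rw [hω, pi_withDensity _ hmp, lintegral_withDensity_eq_lintegral_mul _ hprod hψ.ennreal_ofReal]
  refine lintegral_congr fun y => ?_
  simp only [Pi.mul_apply]
  rw [mul_comm]

variable (ha : Measurable a) (ha0 : ∀ v, 0 ≤ a v) (hK : Measurable (Function.uncurry K))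
    (hp : Measurable (Function.uncurry p)) (hp1 : ∀ ω, ∫⁻ v, p ω v ≤ 1)
    (hR : Measurable R) (hpR : ∀ᵐ ω ∂π, R ω = volume.withDensity (p ω))

lemma bdd_fin (hC : C ≠ ⊤) (hb : ∀ ω, Φ ω ≤ C) : ∫⁻ ω, Φ ω ∂π ≠ ⊤ := by
  refine ne_top_of_le_ne_top ?_ (lintegral_mono hb)
  simp [ENNReal.mul_eq_top, hC]

lemma jj_split_test (ha : Measurable a) (ha0 : ∀ v, 0 ≤ a v) (hK : Measurable (Function.uncurry K))
    (hp : Measurable (Function.uncurry p)) (hp1 : ∀ ω, ∫⁻ v, p ω v ≤ 1)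
    (hpR : ∀ᵐ ω ∂π, R ω = volume.withDensity (p ω))
    (hΦ : Measurable Φ) (hfin : ∫⁻ ω, Φ ω ∂π ≠ ⊤) (n : ℕ) {T : Ω → ℝ} (hT : IsTest R T) :
    ∃ m, n ≤ m ∧ jj π p a K (Fin n) (fun ω => Φ ω * ENNReal.ofReal (T ω))
      + jj π p a K (Fin n) (fun ω => Φ ω * ENNReal.ofReal (1 - T ω)) ≤ jj π p a K (Fin m) Φ := by
  have hT2 := hT.one_sub
  obtain ⟨ι, _, ψ, hψ, hb, hTe⟩ := hT
  refine ⟨n + Fintype.card ι, by omega, ?_⟩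
  have hb2 : ∀ y, 0 ≤ 1 - ψ y ∧ 1 - ψ y ≤ 1 := fun y => by
    have := hb y
    constructor <;> linarith
  have h := jj_split (ι := Fin n) (ι' := ι) (ψ := fun y => ENNReal.ofReal (ψ y))
    (ψ' := fun y => ENNReal.ofReal (1 - ψ y)) ha ha0 hK hp hp1 hΦ hfin
    hψ.ennreal_ofReal (by fun_prop) (fun y => by
      rw [← ENNReal.ofReal_add (hb y).1 (hb2 y).1]; simp)
  have e1 := test_density hp hpR hψ hb
  have e2 := test_density hp hpR (ψ := fun y => 1 - ψ y) (by fun_prop) hb2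
  rw [jj_reindex (((Equiv.refl (Fin n)).sumCongr (Fintype.equivFin ι)).trans finSumFinEquiv)] at h
  refine le_trans (le_of_eq ?_) h
  congr 1
  · refine jj_congr ?_
    filter_upwards [e1] with ω hω
    rw [hω, hTe]
  · refine jj_congr ?_
    filter_upwards [e2] with ω hω
    rw [hω, hTe, integral_sub (integrable_const _) (integrable_bdd _ hψ hb)]
    simp

lemma jj_mono (ha : Measurable a) (ha0 : ∀ v, 0 ≤ a v) (hK : Measurable (Function.uncurry K))
    (hp : Measurable (Function.uncurry p)) (hp1 : ∀ ω, ∫⁻ v, p ω v ≤ 1)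
    (hpR : ∀ᵐ ω ∂π, R ω = volume.withDensity (p ω))
    (hΦ : Measurable Φ) (hfin : ∫⁻ ω, Φ ω ∂π ≠ ⊤) : Monotone fun n => jj π p a K (Fin n) Φ := by
  refine monotone_nat_of_le_succ fun n => ?_
  have h := jj_split (ι := Fin n) (ι' := Fin 1) (ψ := fun y => 1)
    (ψ' := fun y => 0) ha ha0 hK hp hp1 hΦ hfin measurable_const measurable_const (by simp)
  have e1 := test_density (ι := Fin 1) hp hpR (ψ := fun y => 1) measurable_const (by simp)
  rw [jj_reindex (finSumFinEquiv (m := n) (n := 1))] at h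
  refine le_trans (le_of_eq ?_) (le_trans le_self_add h)
  refine jj_congr ?_
  filter_upwards [e1] with ω hω
  simp only [ENNReal.ofReal_one] at hω
  rw [hω]
  simp

lemma jj_key (ha : Measurable a) (ha0 : ∀ v, 0 ≤ a v) (hK : Measurable (Function.uncurry K))
    (hp : Measurable (Function.uncurry p)) (hp1 : ∀ ω, ∫⁻ v, p ω v ≤ 1)
    (hR : Measurable R) (hpR : ∀ᵐ ω ∂π, R ω = volume.withDensity (p ω))
    (hΦ : Measurable Φ) (hC : C ≠ ⊤) (hΦC : ∀ ω, Φ ω ≤ C) (n : ℕ)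
    {χ : Ω → ℝ} (hχ : App π R χ) :
    jj π p a K (Fin n) (fun ω => Φ ω * ENNReal.ofReal (χ ω))
      + jj π p a K (Fin n) (fun ω => Φ ω * ENNReal.ofReal (1 - χ ω))
      ≤ ⨆ m, jj π p a K (Fin m) Φ := by
  obtain ⟨hm, hb, happ⟩ := hχ
  have hpos : ∀ k : ℕ, (0 : ℝ≥0∞) < (2⁻¹) ^ k := fun k =>
    pos_iff_ne_zero.2 (pow_ne_zero _ (by simp))
  choose T hT hlt using fun k : ℕ => happ _ (hpos k)
  have hTm : ∀ k, Measurable (T k) := fun k => (hT k).measurable hR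
  have hlim : ∀ᵐ ω ∂π, Filter.Tendsto (fun k => T k ω) Filter.atTop (nhds (χ ω)) := by
    have hs : ∫⁻ ω, ∑' k, ‖χ ω - T k ω‖ₑ ∂π ≠ ⊤ := by
      rw [lintegral_tsum fun k => by have := hTm k; fun_prop]
      refine ne_top_of_le_ne_top ?_ (ENNReal.tsum_le_tsum fun k => (hlt k).le)
      rw [ENNReal.tsum_geometric]
      simp
    have hms : Measurable fun ω => ∑' k, ‖χ ω - T k ω‖ₑ :=
      Measurable.tsum fun k => by have := hTm k; fun_prop
    filter_upwards [ae_lt_top hms hs] with ω hω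
    have h0 := ENNReal.tendsto_atTop_zero_of_tsum_ne_top hω.ne
    rw [tendsto_iff_edist_tendsto_0]
    refine h0.congr fun k => ?_
    rw [edist_comm, edist_eq_enorm_sub]
  have hofle : ∀ {x : ℝ} {ω}, x ≤ 1 → Φ ω * ENNReal.ofReal x ≤ C := fun {x ω} hx =>
    (mul_le_of_le_one_right' (ENNReal.ofReal_le_one.2 hx)).trans (hΦC ω)
  have l1 := jj_lsc (ι := Fin n) (Φ := fun ω => Φ ω * ENNReal.ofReal (χ ω)) (π := π) ha hK hp hp1
    (Ψ := fun k ω => Φ ω * ENNReal.ofReal (T k ω))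
    (fun k => by have := hTm k; fun_prop) (by fun_prop) hC
    (fun k ω => hofle ((hT k).bdd ω).2) (by
      filter_upwards [hlim] with ω hω
      exact ENNReal.Tendsto.const_mul (ENNReal.tendsto_ofReal hω)
        (Or.inr (ne_top_of_le_ne_top hC (hΦC ω))))
  have l2 := jj_lsc (ι := Fin n) (Φ := fun ω => Φ ω * ENNReal.ofReal (1 - χ ω)) (π := π) ha hK hp hp1
    (Ψ := fun k ω => Φ ω * ENNReal.ofReal (1 - T k ω))
    (fun k => by have := hTm k; fun_prop) (by fun_prop) hC
    (fun k ω => hofle (by have := ((hT k).bdd ω).1; linarith)) (by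
      filter_upwards [hlim] with ω hω
      exact ENNReal.Tendsto.const_mul (ENNReal.tendsto_ofReal (hω.const_sub 1))
        (Or.inr (ne_top_of_le_ne_top hC (hΦC ω))))
  refine (add_le_add l1 l2).trans (liminf_add_le_of fun k => ?_)
  obtain ⟨m, _, hle⟩ := jj_split_test ha ha0 hK hp hp1 hpR hΦ (bdd_fin hC hΦC) n (hT k)
  exact hle.trans (le_iSup (fun m => jj π p a K (Fin m) Φ) m)

lemma affine (ha : Measurable a) (ha0 : ∀ v, 0 ≤ a v) (hK : Measurable (Function.uncurry K))
    (hp : Measurable (Function.uncurry p)) (hp1 : ∀ ω, ∫⁻ v, p ω v ≤ 1)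
    (hR : Measurable R) (hpR : ∀ᵐ ω ∂π, R ω = volume.withDensity (p ω))
    {B : Set Ω} (hB : App π R (B.indicator fun _ => 1))
    (hF : Measurable ΦF) (hG : Measurable ΦG) (hC : C ≠ ⊤) (hFC : ∀ ω, ΦF ω ≤ C)
    (hGC : ∀ ω, ΦG ω ≤ C) (hFB : ∀ ω, ω ∉ B → ΦF ω = 0) (hGB : ∀ ω, ω ∈ B → ΦG ω = 0)
    {s t : ℝ≥0∞} (hs : s ≠ ⊤) (ht : t ≠ ⊤) :
    ⨆ n, jj π p a K (Fin n) (fun ω => s * ΦF ω + t * ΦG ω)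
      = s * (⨆ n, jj π p a K (Fin n) ΦF) + t * ⨆ n, jj π p a K (Fin n) ΦG := by
  have mF := jj_mono ha ha0 hK hp hp1 hpR hF (bdd_fin (π := π) hC hFC)
  have mG := jj_mono ha ha0 hK hp hp1 hpR hG (bdd_fin (π := π) hC hGC)
  have hsC : ∀ ω, s * ΦF ω ≤ s * C := fun ω => by gcongr; exact hFC ω
  have htC : ∀ ω, t * ΦG ω ≤ t * C := fun ω => by gcongr; exact hGC ω
  have hsC' : s * C ≠ ⊤ := ENNReal.mul_ne_top hs hC
  have htC' : t * C ≠ ⊤ := ENNReal.mul_ne_top ht hC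
  rw [ENNReal.mul_iSup, ENNReal.mul_iSup, ENNReal.iSup_add_iSup_of_monotone
    (fun i j h => mul_le_mul_right (mF h) _) (fun i j h => mul_le_mul_right (mG h) _)]
  refine le_antisymm (iSup_mono fun n => ?_) (iSup_le fun n => ?_)
  · rw [← jj_smul ha hK hp hF s hs, ← jj_smul ha hK hp hG t ht]
    exact jj_add_le ha ha0 hK hp hp1 (by fun_prop) (bdd_fin hsC' hsC) (by fun_prop) (bdd_fin htC' htC)
  · have := jj_key (Φ := fun ω => s * ΦF ω + t * ΦG ω) (C := s * C + t * C) ha ha0 hK hp hp1 hR hpR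
      (by fun_prop) (by finiteness) (fun ω => add_le_add (hsC ω) (htC ω)) n hB
    refine le_trans (le_of_eq ?_) this
    rw [← jj_smul ha hK hp hF s hs, ← jj_smul ha hK hp hG t ht]
    congr 2
    · ext ω
      by_cases hω : ω ∈ B <;> simp [hω, hFB, hGB]
    · ext ω
      by_cases hω : ω ∈ B <;> simp [hω, hFB, hGB]

end fin

lemma meanFisher_eq {d : ℕ} (ν γ : ℝ) {π : Measure (ProbabilityMeasure (Euc d))} [IsFiniteMeasure π]
    {p : ProbabilityMeasure (Euc d) → Euc d → ℝ≥0∞} (hp : Measurable (Function.uncurry p))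
    (hpR : ∀ᵐ ρ : ProbabilityMeasure (Euc d) ∂π, (ρ : Measure (Euc d)) = volume.withDensity (p ρ))
    {Φ : ProbabilityMeasure (Euc d) → ℝ≥0∞} (hΦ : Measurable Φ)
    (hmono : Monotone fun n => jj π p (fun v : Euc d => jap v ^ (γ/2))
        (fun v w => ENNReal.ofReal ((‖v - w‖ ^ ((d : ℝ) + ν))⁻¹)) (Fin n) Φ) :
    meanFisher d ν γ (π.withDensity Φ) = ⨆ n, jj π p (fun v : Euc d => jap v ^ (γ/2))
        (fun v w => ENNReal.ofReal ((‖v - w‖ ^ ((d : ℝ) + ν))⁻¹)) (Fin n) Φ := by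
  unfold meanFisher
  rw [← Filter.limsup_nat_add _ 1]
  simp only [fisher_eq_jj ν γ hp hpR hΦ]
  exact (tendsto_atTop_iSup hmono).limsup_eq

end St14

/-- affinity of the mean fractional Fisher information along the
decomposition of `π` into its conditionals on a `W₁`-ball `B` and on its complement:
`Ĩ_{ν,γ}(θF + (1-θ)G) = θ Ĩ_{ν,γ}(F) + (1-θ) Ĩ_{ν,γ}(G)`. -/
theorem stmt_14 (d : ℕ) (hd : 1 ≤ d) (ν γ : ℝ)
    (hν : ν ∈ Set.Ioo (0 : ℝ) 2) (hγ : γ ≤ 0)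
    (π : Measure (ProbabilityMeasure (Euc d))) (hπ : IsProbabilityMeasure π)
    (hac : ∀ᵐ (ρ : ProbabilityMeasure (Euc d)) ∂π, (ρ : Measure (Euc d)) ≪ (volume : Measure (Euc d)))
    (κ : ℝ) (hκ : 1 ≤ κ)
    (hmom : (∫⁻ ρ : ProbabilityMeasure (Euc d), (∫⁻ v, ENNReal.ofReal (jap v ^ κ) ∂(ρ : Measure (Euc d))) ∂π) < ⊤)
    (f₀ : Measure (Euc d)) (hf₀ : IsProbabilityMeasure f₀)
    (hf₀m : (∫⁻ v, ENNReal.ofReal (jap v ^ κ) ∂f₀) < ⊤)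
    (r : ℝ) (hr : 0 < r)
    (B : Set (ProbabilityMeasure (Euc d)))
    (hB : B = {ρ : ProbabilityMeasure (Euc d) | W1 (ρ : Measure (Euc d)) f₀ < r})
    (hBpos : 0 < π B) (hBlt : π B < 1)
    (F G : Measure (ProbabilityMeasure (Euc d)))
    (hF : F = (π B)⁻¹ • π.restrict B) (hG : G = (π Bᶜ)⁻¹ • π.restrict Bᶜ)
    (θ : ℝ) (hθ : θ ∈ Set.Ioo (0 : ℝ) 1) :
    meanFisher d ν γ (ENNReal.ofReal θ • F + ENNReal.ofReal (1-θ) • G)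
      = ENNReal.ofReal θ * meanFisher d ν γ F
        + ENNReal.ofReal (1-θ) * meanFisher d ν γ G := by
  have hR := St14.measurable_coe_pm d
  obtain ⟨p, hp, hp1, hpac⟩ := St14.exists_density hR
  have hpR : ∀ᵐ ρ : ProbabilityMeasure (Euc d) ∂π,
      (ρ : Measure (Euc d)) = volume.withDensity (p ρ) := by
    filter_upwards [hac] with ρ hρ
    exact hpac ρ hρ
  obtain ⟨B', hB', hBB'⟩ := St14.ball_ae π hκ hmom f₀ hf₀m r
  rw [← hB] at hBB'
  have hApp := St14.app_of_measurableSet (π := π) hR hB'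
  have hBm : MeasurableSet B' := hR.comap_le _ hB'
  have hπc : π Bᶜ ≠ 0 := by
    intro h0
    have h1 : π Set.univ ≤ π B + π Bᶜ := by
      rw [← Set.union_compl_self B]
      exact measure_union_le _ _
    rw [h0, add_zero, measure_univ] at h1
    exact absurd hBlt (not_lt.2 h1)
  have ha : Measurable fun v : Euc d => jap v ^ (γ/2) := by
    unfold jap
    fun_prop
  have ha0 : ∀ v : Euc d, 0 ≤ jap v ^ (γ/2) := fun v => Real.rpow_nonneg (Real.sqrt_nonneg _) _
  have hK : Measurable (Function.uncurry fun v w : Euc d =>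
      ENNReal.ofReal ((‖v - w‖ ^ ((d : ℝ) + ν))⁻¹)) := by
    unfold Function.uncurry
    fun_prop
  have hcF : (π B)⁻¹ ≠ ⊤ := ENNReal.inv_ne_top.2 hBpos.ne'
  have hcG : (π Bᶜ)⁻¹ ≠ ⊤ := ENNReal.inv_ne_top.2 hπc
  set ΦF : ProbabilityMeasure (Euc d) → ℝ≥0∞ := B'.indicator (fun _ => (π B)⁻¹) with hΦF
  set ΦG : ProbabilityMeasure (Euc d) → ℝ≥0∞ := B'ᶜ.indicator (fun _ => (π Bᶜ)⁻¹) with hΦG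
  have mF : Measurable ΦF := measurable_const.indicator hBm
  have mG : Measurable ΦG := measurable_const.indicator hBm.compl
  have eF : F = π.withDensity ΦF := by
    rw [hF, hΦF, withDensity_indicator hBm, withDensity_const, Measure.restrict_congr_set hBB']
  have eG : G = π.withDensity ΦG := by
    rw [hG, hΦG, withDensity_indicator hBm.compl, withDensity_const,
      Measure.restrict_congr_set hBB'.compl]
  have hC : (π B)⁻¹ + (π Bᶜ)⁻¹ ≠ ⊤ := ENNReal.add_ne_top.2 ⟨hcF, hcG⟩
  have hFC : ∀ ω, ΦF ω ≤ (π B)⁻¹ + (π Bᶜ)⁻¹ := fun ω =>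
    (Set.indicator_le_self' (fun _ _ => zero_le) ω).trans le_self_add
  have hGC : ∀ ω, ΦG ω ≤ (π B)⁻¹ + (π Bᶜ)⁻¹ := fun ω =>
    (Set.indicator_le_self' (fun _ _ => zero_le) ω).trans le_add_self
  have eH : ENNReal.ofReal θ • F + ENNReal.ofReal (1-θ) • G
      = π.withDensity (fun ω => ENNReal.ofReal θ * ΦF ω + ENNReal.ofReal (1-θ) * ΦG ω) := by
    rw [eF, eG, ← withDensity_smul _ mF, ← withDensity_smul _ mG, ← withDensity_add_left (mF.const_smul _)]
    rfl
  have hHC : ∀ ω, ENNReal.ofReal θ * ΦF ω + ENNReal.ofReal (1-θ) * ΦG ω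
      ≤ ENNReal.ofReal θ * ((π B)⁻¹ + (π Bᶜ)⁻¹) + ENNReal.ofReal (1-θ) * ((π B)⁻¹ + (π Bᶜ)⁻¹) :=
    fun ω => add_le_add (mul_le_mul_right (hFC ω) _) (mul_le_mul_right (hGC ω) _)
  have hHC' : ENNReal.ofReal θ * ((π B)⁻¹ + (π Bᶜ)⁻¹)
      + ENNReal.ofReal (1-θ) * ((π B)⁻¹ + (π Bᶜ)⁻¹) ≠ ⊤ :=
    ENNReal.add_ne_top.2 ⟨ENNReal.mul_ne_top ENNReal.ofReal_ne_top hC,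
      ENNReal.mul_ne_top ENNReal.ofReal_ne_top hC⟩
  have mono := fun {Φ : ProbabilityMeasure (Euc d) → ℝ≥0∞} (hΦ : Measurable Φ)
      (hfin : ∫⁻ ω, Φ ω ∂π ≠ ⊤) => St14.jj_mono ha ha0 hK hp hp1 hpR hΦ hfin
  have mH : Measurable fun ω => ENNReal.ofReal θ * ΦF ω + ENNReal.ofReal (1-θ) * ΦG ω := by fun_prop
  rw [eH, eF, eG,
    St14.meanFisher_eq ν γ hp hpR mF (mono mF (St14.bdd_fin hC hFC)),
    St14.meanFisher_eq ν γ hp hpR mG (mono mG (St14.bdd_fin hC hGC)),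
    St14.meanFisher_eq ν γ hp hpR mH (mono mH (St14.bdd_fin hHC' hHC))]
  exact St14.affine ha ha0 hK hp hp1 hR hpR hApp mF mG hC hFC hGC
    (fun ω hω => Set.indicator_of_notMem hω _)
    (fun ω hω => Set.indicator_of_notMem (by simpa using hω) _)
    ENNReal.ofReal_ne_top ENNReal.ofReal_ne_top



end
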